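/- Broken replica bound for the ground state: for every N ≥ 1, h ∈ ℝ, and every zero-temperature order parameter x̄ (piecewise constant with values 0 ≤ m̄_1 ≤ … ≤ m̄_K), the quenched ground state energy density of the SK model satisfies e_N(h) ≤ α̃(h;x̄) := f̄(0,h;x̄) − (1/2) ∫₀¹ q x̄(q) dq; consequently e_N(h) ≤ inf_{x̄} α̃(h;x̄), uniformly in N. -/

import Mathlib

open MeasureTheory ProbabilityTheory Filter

noncomputable section

/-! ## Gaussian disorder -/

/-- The standard (centered, unit variance) Gaussian measure on `ℝ`. -/
def stdGauss : Measure ℝ := gaussianReal 0 1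

instance : IsProbabilityMeasure stdGauss := by unfold stdGauss; infer_instance

/-- `N` i.i.d. standard Gaussian variables. -/
def gaussN (N : ℕ) : Measure (Fin N → ℝ) := Measure.pi fun _ => stdGauss

instance (N : ℕ) : IsProbabilityMeasure (gaussN N) := by unfold gaussN; infer_instance

/-- The i.i.d. standard Gaussian couplings `J_{ij}` (only entries with `i < j` are used). -/
def gaussC (N : ℕ) : Measure (Fin N → Fin N → ℝ) := Measure.pi fun _ => gaussN N

instance (N : ℕ) : IsProbabilityMeasure (gaussC N) := by unfold gaussC; infer_instance

/-- The i.i.d. standard Gaussian one-body fields `J_i^a`, `a = 1, …, K`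
(row `⟨a-1⟩ : Fin K` corresponds to the level `a` of the paper). -/
def gaussS (K N : ℕ) : Measure (Fin K → Fin N → ℝ) := Measure.pi fun _ => gaussN N

instance (K N : ℕ) : IsProbabilityMeasure (gaussS K N) := by unfold gaussS; infer_instance

/-- I.i.d. standard Gaussian couplings indexed by subsets of sites, for the p-spin model
(only the cardinality-`p` subsets are used). -/
def gaussP (N : ℕ) : Measure (Finset (Fin N) → ℝ) := Measure.pi fun _ => stdGauss

instance (N : ℕ) : IsProbabilityMeasure (gaussP N) := by unfold gaussP; infer_instance

/-! ## Spins and overlaps -/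

/-- The spin value (`±1`) of a Boolean configuration entry. -/
def spin (b : Bool) : ℝ := if b then 1 else -1

/-- The overlap `q₁₂ = N⁻¹ ∑ᵢ σᵢ⁽¹⁾ σᵢ⁽²⁾` of two replicas. -/
def overlap (N : ℕ) (σ τ : Fin N → Bool) : ℝ := (N : ℝ)⁻¹ * ∑ i, spin (σ i) * spin (τ i)

/-! ## Piecewise constant functional order parameters and the Parisi function -/

/-- One backward step of the Parisi recursion on an interval of constancy of the
functional order parameter: from `g = f(q_a, ·)`, with value `m` of the order parameter
and `s = q_a - q`, produce `f(q, ·)`. -/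
def pStep (m s : ℝ) (g : ℝ → ℝ) (y : ℝ) : ℝ :=
  if m = 0 then ∫ z, g (y + z * Real.sqrt s) ∂stdGauss
  else m⁻¹ * Real.log (∫ z, Real.exp (m * g (y + z * Real.sqrt s)) ∂stdGauss)

/-- `parisiLevel K q m β j` is the Parisi function `f(q_{K-j}, ·; x, β)` at the node
`q_{K-j}`, obtained by `j` backward steps from the final condition `f(q_K, y) = log cosh (β y)`. -/
def parisiLevel (K : ℕ) (q m : ℕ → ℝ) (β : ℝ) : ℕ → ℝ → ℝ
  | 0 => fun y => Real.log (Real.cosh (β * y))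
  | j + 1 => pStep (m (K - j)) (q (K - j) - q (K - j - 1)) (parisiLevel K q m β j)

/-- The Parisi function `f(r, y; x, β)` for a piecewise constant order parameter `x`
given by nodes `q` and values `m`:  for `q_{a-1} ≤ r ≤ q_a` it is obtained from
`f(q_a, ·)` by one backward step with value `m_a` over a time `q_a - r`. -/
def parisiF (K : ℕ) (q m : ℕ → ℝ) (β : ℝ) (r y : ℝ) : ℝ :=
  pStep (m (sInf {a : ℕ | r ≤ q a})) (q (sInf {a : ℕ | r ≤ q a}) - r)
    (parisiLevel K q m β (K - sInf {a : ℕ | r ≤ q a})) y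

/-- The functional order parameter as a function: `x(r) = m_a` for `q_{a-1} ≤ r < q_a`,
and `x(1) = m_K`. -/
def xFun (K : ℕ) (q m : ℕ → ℝ) (r : ℝ) : ℝ :=
  if 1 ≤ r then m K else m (sInf {a : ℕ | r < q a})

/-- A piecewise constant functional order parameter:
`0 = q_0 ≤ q_1 ≤ … ≤ q_K = 1`, `0 ≤ m_1 ≤ … ≤ m_K ≤ 1`,
with the conventions `m_0 = 0`, `m_{K+1} = 1`. -/
structure OrderParam where
  K : ℕ
  hK : 1 ≤ K
  q : ℕ → ℝ
  m : ℕ → ℝ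
  hq0 : q 0 = 0
  hqK : q K = 1
  hq_mono : ∀ a, a < K → q a ≤ q (a + 1)
  hm0 : m 0 = 0
  hmtop : m (K + 1) = 1
  hm1 : 0 ≤ m 1
  hm_mono : ∀ a, 1 ≤ a → a < K → m a ≤ m (a + 1)
  hmK : m K ≤ 1

/-- Guerra's trial function `ᾱ(β, h; x) = log 2 + f(0, h; x, β) - (β²/2) ∫₀¹ r x(r) dr`. -/
def trialAlpha (K : ℕ) (q m : ℕ → ℝ) (β h : ℝ) : ℝ :=
  Real.log 2 + parisiLevel K q m β K h - β ^ 2 / 2 * ∫ r in (0 : ℝ)..1, r * xFun K q m r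

/-! ## The Sherrington–Kirkpatrick model -/

/-- The SK Hamiltonian `H_N(σ, h, J) = -(1/√N) ∑_{i<j} J_{ij} σ_i σ_j - h ∑_i σ_i`. -/
def hamSK (N : ℕ) (h : ℝ) (Jc : Fin N → Fin N → ℝ) (σ : Fin N → Bool) : ℝ :=
  -(1 / Real.sqrt N) * ∑ i, ∑ j, (if i < j then Jc i j * spin (σ i) * spin (σ j) else 0)
    - h * ∑ i, spin (σ i)

/-- The SK partition function `Z_N(β, h, J)`. -/
def ZSK (N : ℕ) (β h : ℝ) (Jc : Fin N → Fin N → ℝ) : ℝ :=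
  ∑ σ : Fin N → Bool, Real.exp (-(β * hamSK N h Jc σ))

/-- The quenched average `N⁻¹ E log Z_N(β, h, J)`. -/
def quenchedFE (N : ℕ) (β h : ℝ) : ℝ :=
  (N : ℝ)⁻¹ * ∫ Jc, Real.log (ZSK N β h Jc) ∂gaussC N

/-- The ground state energy density `e_N(J, h)`, defined by
`-e_N(J, h) = N⁻¹ min_σ H_N(σ, h, J)`. -/
def eGS (N : ℕ) (h : ℝ) (Jc : Fin N → Fin N → ℝ) : ℝ :=
  -((N : ℝ)⁻¹ * ⨅ σ : Fin N → Bool, hamSK N h Jc σ)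

/-- The quenched ground state energy density `e_N(h) = E(e_N(J, h))`. -/
def eQuenched (N : ℕ) (h : ℝ) : ℝ := ∫ Jc, eGS N h Jc ∂gaussC N

/-! ## The interpolating system -/

/-- The interpolating Boltzmann factor. -/
def bFac (N K : ℕ) (β h t : ℝ) (q : ℕ → ℝ) (Jc : Fin N → Fin N → ℝ)
    (Js : Fin K → Fin N → ℝ) (σ : Fin N → Bool) : ℝ :=
  Real.exp (β * Real.sqrt (t / N) *
        ∑ i, ∑ j, (if i < j then Jc i j * spin (σ i) * spin (σ j) else 0)
      + β * h * ∑ i, spin (σ i)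
      + β * Real.sqrt (1 - t) *
          ∑ a : Fin K, Real.sqrt (q (a.val + 1) - q a.val) * ∑ i, Js a i * spin (σ i))

/-- The interpolating partition function `Z̃_N(β, h; t; x; J)`. -/
def Ztil (N K : ℕ) (β h t : ℝ) (q : ℕ → ℝ) (Jc : Fin N → Fin N → ℝ)
    (Js : Fin K → Fin N → ℝ) : ℝ :=
  ∑ σ : Fin N → Bool, bFac N K β h t q Jc Js σ

/-- `Wrec … j` is the random variable `Z_{K-j}`:  `Z_K = Z̃_N` and
`Z_{a-1} = (E_a (Z_a^{m_a}))^{1/m_a}`, where `E_a` integrates the Gaussian row `J^a`. -/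
def Wrec (N K : ℕ) (β h t : ℝ) (q m : ℕ → ℝ) :
    ℕ → (Fin N → Fin N → ℝ) → (Fin K → Fin N → ℝ) → ℝ
  | 0 => Ztil N K β h t q
  | j + 1 => fun Jc Js =>
      if hj : j < K then
        (∫ g : Fin N → ℝ,
            (Wrec N K β h t q m j Jc (Function.update Js ⟨K - 1 - j, by omega⟩ g)) ^ m (K - j)
          ∂gaussN N) ^ (m (K - j))⁻¹
      else Wrec N K β h t q m j Jc Js

/-- `Zrec … a` is the random variable `Z_a` of the broken replica interpolation. -/
def Zrec (N K : ℕ) (β h t : ℝ) (q m : ℕ → ℝ) (a : ℕ) :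
    (Fin N → Fin N → ℝ) → (Fin K → Fin N → ℝ) → ℝ :=
  Wrec N K β h t q m (K - a)

/-- The interpolating auxiliary function `α̃_N(t) = N⁻¹ E₀ log Z₀`. -/
def atilde (N K : ℕ) (β h : ℝ) (q m : ℕ → ℝ) (t : ℝ) : ℝ :=
  (N : ℝ)⁻¹ * ∫ Jc, Real.log (Wrec N K β h t q m K Jc 0) ∂gaussC N

/-- The normalized weight `f_a = Z_a^{m_a} / E_a(Z_a^{m_a}) = Z_a^{m_a} / Z_{a-1}^{m_a}`. -/
def fWeight (N K : ℕ) (β h t : ℝ) (q m : ℕ → ℝ) (a : ℕ) (Jc : Fin N → Fin N → ℝ)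
    (Js : Fin K → Fin N → ℝ) : ℝ :=
  Zrec N K β h t q m a Jc Js ^ m a / Zrec N K β h t q m (a - 1) Jc Js ^ m a

/-- The Gibbs expectation `ω(A)` of the interpolating Boltzmann factor. -/
def gibbs (N K : ℕ) (β h t : ℝ) (q : ℕ → ℝ) (A : (Fin N → Bool) → ℝ)
    (Jc : Fin N → Fin N → ℝ) (Js : Fin K → Fin N → ℝ) : ℝ :=
  (∑ σ : Fin N → Bool, A σ * bFac N K β h t q Jc Js σ) / Ztil N K β h t q Jc Js

/-- The two-replica Gibbs product expectation `Ω(A)`. -/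
def gibbs2 (N K : ℕ) (β h t : ℝ) (q : ℕ → ℝ) (A : (Fin N → Bool) → (Fin N → Bool) → ℝ)
    (Jc : Fin N → Fin N → ℝ) (Js : Fin K → Fin N → ℝ) : ℝ :=
  (∑ σ : Fin N → Bool, ∑ τ : Fin N → Bool,
      A σ τ * bFac N K β h t q Jc Js σ * bFac N K β h t q Jc Js τ) /
    Ztil N K β h t q Jc Js ^ 2

/-- `omT1 … A j` is the partially averaged state `ω̃_{K-j}(A)`:
`ω̃_K = ω` and `ω̃_{a-1}(·) = E_a (f_a ω̃_a(·))`. -/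
def omT1 (N K : ℕ) (β h t : ℝ) (q m : ℕ → ℝ) (A : (Fin N → Bool) → ℝ) :
    ℕ → (Fin N → Fin N → ℝ) → (Fin K → Fin N → ℝ) → ℝ
  | 0 => gibbs N K β h t q A
  | j + 1 => fun Jc Js =>
      if hj : j < K then
        ∫ g : Fin N → ℝ,
          fWeight N K β h t q m (K - j) Jc (Function.update Js ⟨K - 1 - j, by omega⟩ g) *
            omT1 N K β h t q m A j Jc (Function.update Js ⟨K - 1 - j, by omega⟩ g)
          ∂gaussN N
      else omT1 N K β h t q m A j Jc Js

/-- `omT2 … A j` is the partially averaged two-replica state `Ω̃_{K-j}(A)`: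
`Ω̃_K = Ω` and `Ω̃_{a-1}(·) = E_a (f_a Ω̃_a(·))`. -/
def omT2 (N K : ℕ) (β h t : ℝ) (q m : ℕ → ℝ) (A : (Fin N → Bool) → (Fin N → Bool) → ℝ) :
    ℕ → (Fin N → Fin N → ℝ) → (Fin K → Fin N → ℝ) → ℝ
  | 0 => gibbs2 N K β h t q A
  | j + 1 => fun Jc Js =>
      if hj : j < K then
        ∫ g : Fin N → ℝ,
          fWeight N K β h t q m (K - j) Jc (Function.update Js ⟨K - 1 - j, by omega⟩ g) *
            omT2 N K β h t q m A j Jc (Function.update Js ⟨K - 1 - j, by omega⟩ g)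
          ∂gaussN N
      else omT2 N K β h t q m A j Jc Js

/-- The deformed quenched average `⟨A⟩_a = E(f_1 ⋯ f_a Ω̃_a(A))` at interpolation
parameter `t`, for a function `A` of two replicas. -/
def angA (N K : ℕ) (β h t : ℝ) (q m : ℕ → ℝ) (a : ℕ)
    (A : (Fin N → Bool) → (Fin N → Bool) → ℝ) : ℝ :=
  ∫ Jc, ∫ Js,
      (∏ b ∈ Finset.Icc 1 a, fWeight N K β h t q m b Jc Js) *
        omT2 N K β h t q m A (K - a) Jc Js
    ∂gaussS K N ∂gaussC N

/-! ## Zero temperature (ground state) objects -/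

/-- The zero-temperature Parisi recursion: `parisiLevelBar K q m j` is `f̄(q_{K-j}, ·; x̄)`,
with final condition `f̄(q_K, y) = |y|`. -/
def parisiLevelBar (K : ℕ) (q m : ℕ → ℝ) : ℕ → ℝ → ℝ
  | 0 => fun y => |y|
  | j + 1 => pStep (m (K - j)) (q (K - j) - q (K - j - 1)) (parisiLevelBar K q m j)

/-- A zero-temperature piecewise constant order parameter: nodes
`0 = q_0 ≤ … ≤ q_K = 1` and nondecreasing values `0 ≤ m̄_1 ≤ … ≤ m̄_K`
(no upper bound `1`), with the convention `m̄_0 = 0`. -/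
structure ZeroTParam where
  K : ℕ
  hK : 1 ≤ K
  q : ℕ → ℝ
  m : ℕ → ℝ
  hq0 : q 0 = 0
  hqK : q K = 1
  hq_mono : ∀ a, a < K → q a ≤ q (a + 1)
  hm0 : m 0 = 0
  hm1 : 0 ≤ m 1
  hm_mono : ∀ a, 1 ≤ a → a < K → m a ≤ m (a + 1)

/-- The zero-temperature trial function `α̃(h; x̄) = f̄(0, h; x̄) - (1/2) ∫₀¹ r x̄(r) dr`. -/
def gsTrial (K : ℕ) (q m : ℕ → ℝ) (h : ℝ) : ℝ :=
  parisiLevelBar K q m K h - 1 / 2 * ∫ r in (0 : ℝ)..1, r * xFun K q m r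

/-! ## The p-spin model -/

/-- A piecewise constant functional order parameter on `[0, p/2]`:
`0 = q_0 ≤ … ≤ q_K = p/2` and `0 ≤ m_1 ≤ … ≤ m_K ≤ 1`. -/
structure POrderParam (p : ℕ) where
  K : ℕ
  hK : 1 ≤ K
  q : ℕ → ℝ
  m : ℕ → ℝ
  hq0 : q 0 = 0
  hqK : q K = p / 2
  hq_mono : ∀ a, a < K → q a ≤ q (a + 1)
  hm1 : 0 ≤ m 1
  hm_mono : ∀ a, 1 ≤ a → a < K → m a ≤ m (a + 1)
  hmK : m K ≤ 1

/-- The p-spin Hamiltonian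
`H_N(σ,h,J) = -(p!/(2N^{p-1}))^{1/2} ∑_{i_1<…<i_p} J_{i_1…i_p} σ_{i_1}⋯σ_{i_p} - h ∑_i σ_i`. -/
def hamP (p N : ℕ) (h : ℝ) (J : Finset (Fin N) → ℝ) (σ : Fin N → Bool) : ℝ :=
  -Real.sqrt ((Nat.factorial p : ℝ) / (2 * (N : ℝ) ^ (p - 1))) *
      ∑ S ∈ Finset.powersetCard p (Finset.univ : Finset (Fin N)), J S * ∏ i ∈ S, spin (σ i)
    - h * ∑ i, spin (σ i)

/-- The p-spin partition function. -/
def ZP (p N : ℕ) (β h : ℝ) (J : Finset (Fin N) → ℝ) : ℝ :=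
  ∑ σ : Fin N → Bool, Real.exp (-(β * hamP p N h J σ))

/-- The p-spin quenched average `N⁻¹ E log Z_N^{(p)}(β, h, J)`. -/
def quenchedFEP (p N : ℕ) (β h : ℝ) : ℝ :=
  (N : ℝ)⁻¹ * ∫ J, Real.log (ZP p N β h J) ∂gaussP N

/-- The functional order parameter on `[0, p/2]` as a function. -/
def xFunP (p K : ℕ) (q m : ℕ → ℝ) (r : ℝ) : ℝ :=
  if (p : ℝ) / 2 ≤ r then m K else m (sInf {a : ℕ | r < q a})

/-- The change of variables `q̄(r)` defined by `2r = p q̄^{p-1}`. -/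
def qBar (p : ℕ) (r : ℝ) : ℝ := (2 * r / p) ^ (((p : ℝ) - 1)⁻¹)

/-- The p-spin trial function
`ᾱ_p(β, h; x) = log 2 + f(0, h; x, β) - (β²/2) ∫₀^{p/2} q̄(r) x(r) dr`. -/
def trialAlphaP (p K : ℕ) (q m : ℕ → ℝ) (β h : ℝ) : ℝ :=
  Real.log 2 + parisiLevel K q m β K h
    - β ^ 2 / 2 * ∫ r in (0 : ℝ)..((p : ℝ) / 2), qBar p r * xFunP p K q m r

/-!
For inverse temperature `β > 0`, replace the maximum over configurations by `β⁻¹ log ∑ exp (β ·)`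
and interpolate as Guerra does: the SK couplings get amplitude `cos θ`, and independent Gaussian
fields on every spin, organised in the levels of the order parameter, get amplitude `sin θ`. At
`θ = 0` the interpolating quantity dominates `N e_N(h)`; at `θ = π / 2` the spins decouple and it is
at most `N (f̄(0, h) + β⁻¹ log 2)`.

The interpolation is not differentiated through the Parisi recursion. Instead, a tangent lower bound
comparing the angles `t` and `s` is propagated through each Gaussian step
`g ↦ m⁻¹ log E exp (m g)`: Jensen's inequality for the tilted measure followed by Gaussian
integration by parts turns the change of amplitude from `w` to `w'` into the covariance correction
`(w' - w) wᵀ`. Once all steps are taken, the corrections combine into `-N (R - q)²` terms, `R` being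
the overlap, which have a favourable sign, and the remaining errors are `O((s - t)²)`, so they
disappear when `[0, π / 2]` is partitioned finely. Finally `β → ∞`.
-/

/-! ## Gaussian integration by parts -/

section GaussianIntegrationByParts

open scoped NNReal

lemma hasDerivAt_gaussianPDFReal (μ : ℝ) (v : ℝ≥0) (x : ℝ) :
    HasDerivAt (gaussianPDFReal μ v) (-((x - μ) / v) * gaussianPDFReal μ v x) x := by
  have hexponent : HasDerivAt (fun y : ℝ => -(y - μ) ^ 2 / (2 * v)) (-((x - μ) / v)) x := by
    refine ((((hasDerivAt_id x).sub_const μ).pow 2).neg.div_const (2 * (v : ℝ))).congr_deriv ?_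
    simp only [id, Nat.cast_ofNat]
    ring
  refine (hexponent.exp.const_mul (√(2 * Real.pi * v))⁻¹).congr_deriv ?_
  rw [gaussianPDFReal]
  ring

lemma integrable_gaussianPDFReal_mul {μ : ℝ} {v : ℝ≥0} (hv : v ≠ 0) {f : ℝ → ℝ}
    (hf : Integrable f (gaussianReal μ v)) :
    Integrable fun x => gaussianPDFReal μ v x * f x := by
  rw [gaussianReal_of_var_ne_zero _ hv, integrable_withDensity_iff_integrable_smul'
    (measurable_gaussianPDF _ _) (Eventually.of_forall fun _ => gaussianPDF_lt_top)] at hf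
  simpa only [toReal_gaussianPDF, smul_eq_mul] using hf

theorem integral_sub_mul_gaussianReal {μ : ℝ} {v : ℝ≥0} {f f' : ℝ → ℝ}
    (hderiv : ∀ x, HasDerivAt f (f' x) x) (hf : Integrable f (gaussianReal μ v))
    (hf' : Integrable f' (gaussianReal μ v))
    (hxf : Integrable (fun x => (x - μ) * f x) (gaussianReal μ v)) :
    ∫ x, (x - μ) * f x ∂gaussianReal μ v = v * ∫ x, f' x ∂gaussianReal μ v := by
  obtain rfl | hv := eq_or_ne v 0
  · simp
  have hv' : (v : ℝ) ≠ 0 := by exact_mod_cast hv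
  have hparts : ∫ x, (v * (gaussianPDFReal μ v x * f' x)
      - gaussianPDFReal μ v x * ((x - μ) * f x)) = 0 := by
    refine integral_eq_zero_of_hasDerivAt_of_integrable
      (f := fun x => v * (gaussianPDFReal μ v x * f x)) (fun x => ?_)
      (((integrable_gaussianPDFReal_mul hv hf').const_mul _).sub
        (integrable_gaussianPDFReal_mul hv hxf))
      ((integrable_gaussianPDFReal_mul hv hf).const_mul _)
    refine (((hasDerivAt_gaussianPDFReal μ v x).mul (hderiv x)).const_mul (v : ℝ)).congr_deriv ?_
    field_simp
    ring
  rw [integral_sub ((integrable_gaussianPDFReal_mul hv hf').const_mul _)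
    (integrable_gaussianPDFReal_mul hv hxf), integral_const_mul] at hparts
  simp only [integral_gaussianReal_eq_integral_smul hv, smul_eq_mul]
  linarith

end GaussianIntegrationByParts

/-! ## Functions of exponential growth -/

section ExpGrowth

open scoped NNReal

variable {E : Type*} [NormedAddCommGroup E]

lemma abs_le_mul_norm_add_one_of_lipschitzWith {K : ℝ≥0} {φ : E → ℝ} (hφ : LipschitzWith K φ)
    (x : E) : |φ x| ≤ (|φ 0| + K) * (‖x‖ + 1) := by
  have hdist := hφ.dist_le_mul x 0
  rw [Real.dist_eq, dist_zero_right] at hdist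
  nlinarith [abs_sub_abs_le_abs_sub (φ x) (φ 0), mul_nonneg (abs_nonneg (φ 0)) (norm_nonneg x),
    K.coe_nonneg]

/-- Continuous real functions growing at most exponentially in the norm. They form an algebra whose
members are integrable along every Gaussian line. A single constant `C` serves both as the rate and
as the logarithm of the prefactor. -/
def HasExpGrowth (φ : E → ℝ) : Prop :=
  Continuous φ ∧ ∃ C, 0 ≤ C ∧ ∀ x, |φ x| ≤ Real.exp (C * (‖x‖ + 1))

namespace HasExpGrowth

variable {φ ψ : E → ℝ}

lemma of_abs_le (hφ : Continuous φ) {B : ℝ} (hB : ∀ x, |φ x| ≤ B) : HasExpGrowth φ := by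
  have hB₀ : 0 ≤ B := (abs_nonneg _).trans (hB 0)
  refine ⟨hφ, B, hB₀, fun x => (hB x).trans ?_⟩
  have := Real.add_one_le_exp (B * (‖x‖ + 1))
  nlinarith [mul_nonneg hB₀ (norm_nonneg x)]

lemma const (c : ℝ) : HasExpGrowth fun _ : E => c :=
  of_abs_le continuous_const fun _ => le_rfl

lemma mul (hφ : HasExpGrowth φ) (hψ : HasExpGrowth ψ) : HasExpGrowth fun x => φ x * ψ x := by
  obtain ⟨hφc, C, hC, hφC⟩ := hφ
  obtain ⟨hψc, D, hD, hψD⟩ := hψ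
  refine ⟨hφc.mul hψc, C + D, add_nonneg hC hD, fun x => ?_⟩
  rw [abs_mul, add_mul, Real.exp_add]
  exact mul_le_mul (hφC x) (hψD x) (abs_nonneg _) (Real.exp_pos _).le

lemma add (hφ : HasExpGrowth φ) (hψ : HasExpGrowth ψ) : HasExpGrowth fun x => φ x + ψ x := by
  obtain ⟨hφc, C, hC, hφC⟩ := hφ
  obtain ⟨hψc, D, hD, hψD⟩ := hψ
  refine ⟨hφc.add hψc, C + D + 1, by positivity, fun x => ?_⟩
  set n := ‖x‖ + 1
  have hn : 1 ≤ n := le_add_of_nonneg_left (norm_nonneg x)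
  have hexp_n : 2 ≤ Real.exp n := by linarith [Real.add_one_le_exp n]
  have hC_one : 1 ≤ Real.exp (C * n) := Real.one_le_exp (by positivity)
  have hD_one : 1 ≤ Real.exp (D * n) := Real.one_le_exp (by positivity)
  calc |φ x + ψ x| ≤ Real.exp (C * n) + Real.exp (D * n) :=
        (abs_add_le _ _).trans (add_le_add (hφC x) (hψD x))
    _ ≤ Real.exp (C * n) * Real.exp (D * n) * 2 := by nlinarith
    _ ≤ Real.exp (C * n) * Real.exp (D * n) * Real.exp n := by gcongr
    _ = Real.exp ((C + D + 1) * n) := by simp only [← Real.exp_add]; ring_nf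

lemma sub (hφ : HasExpGrowth φ) (hψ : HasExpGrowth ψ) : HasExpGrowth fun x => φ x - ψ x := by
  simpa only [neg_one_mul, ← sub_eq_add_neg] using hφ.add ((const (-1)).mul hψ)

lemma sum {ι : Type*} (s : Finset ι) {φ : ι → E → ℝ} (hφ : ∀ i ∈ s, HasExpGrowth (φ i)) :
    HasExpGrowth fun x => ∑ i ∈ s, φ i x := by
  classical
  induction s using Finset.induction_on with
  | empty => simpa only [Finset.sum_empty] using const 0
  | insert i s hi ih =>
    simp only [Finset.sum_insert hi]
    exact (hφ i (s.mem_insert_self i)).add (ih fun j hj => hφ j (Finset.mem_insert_of_mem hj))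

lemma of_lipschitzWith {K : ℝ≥0} (hφ : LipschitzWith K φ) : HasExpGrowth φ := by
  refine ⟨hφ.continuous, |φ 0| + K, by positivity, fun x => ?_⟩
  exact (abs_le_mul_norm_add_one_of_lipschitzWith hφ x).trans
    ((le_add_of_nonneg_right zero_le_one).trans (Real.add_one_le_exp _))

protected lemma id : HasExpGrowth fun z : ℝ => z := of_lipschitzWith LipschitzWith.id

lemma exp_mul_of_lipschitzWith {K : ℝ≥0} (hφ : LipschitzWith K φ) (m : ℝ) :
    HasExpGrowth fun x => Real.exp (m * φ x) := by
  refine ⟨(hφ.continuous.const_mul m).rexp, |m| * (|φ 0| + K), by positivity, fun x => ?_⟩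
  rw [Real.abs_exp, Real.exp_le_exp]
  calc m * φ x ≤ |m| * |φ x| := (le_abs_self _).trans (abs_mul _ _).le
    _ ≤ |m| * ((|φ 0| + K) * (‖x‖ + 1)) := by
          gcongr
          exact abs_le_mul_norm_add_one_of_lipschitzWith hφ x
    _ = |m| * (|φ 0| + K) * (‖x‖ + 1) := by ring

variable [NormedSpace ℝ E]

lemma line (hφ : HasExpGrowth φ) (x v : E) : HasExpGrowth fun z : ℝ => φ (x + z • v) := by
  obtain ⟨hφc, C, hC, hφC⟩ := hφ
  refine ⟨hφc.comp (by fun_prop), C * (‖x‖ + ‖v‖ + 1), by positivity, fun z => (hφC _).trans ?_⟩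
  rw [Real.exp_le_exp, mul_assoc]
  gcongr
  have hnorm : ‖x + z • v‖ ≤ ‖x‖ + ‖z‖ * ‖v‖ :=
    (norm_add_le _ _).trans_eq (by rw [norm_smul])
  nlinarith [mul_nonneg (norm_nonneg x) (norm_nonneg z), norm_nonneg z, norm_nonneg v]

lemma exists_integrable_bound (hφ : HasExpGrowth φ) (v : E) (R : ℝ) :
    ∃ g : ℝ → ℝ, Integrable g stdGauss ∧ ∀ x, ‖x‖ ≤ R → ∀ z : ℝ, |φ (x + z • v)| ≤ g z := by
  obtain ⟨-, C, hC, hφC⟩ := hφ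
  have hint : Integrable (fun z : ℝ => Real.exp (C * ‖v‖ * |z|)) stdGauss :=
    integrable_exp_mul_abs (integrable_exp_mul_gaussianReal _) (integrable_exp_mul_gaussianReal _)
  refine ⟨_, hint.const_mul (Real.exp (C * (R + 1))), fun x hx z => (hφC _).trans ?_⟩
  rw [← Real.exp_add, Real.exp_le_exp]
  have hnorm : ‖x + z • v‖ ≤ R + |z| * ‖v‖ := by
    refine (norm_add_le _ _).trans ?_
    rw [norm_smul, Real.norm_eq_abs]
    gcongr
  nlinarith

lemma integrable {φ : ℝ → ℝ} (hφ : HasExpGrowth φ) : Integrable φ stdGauss := by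
  obtain ⟨g, hg, hφg⟩ := hφ.exists_integrable_bound 1 0
  refine hg.mono' hφ.1.aestronglyMeasurable (Eventually.of_forall fun z => ?_)
  simpa using hφg 0 norm_zero.le z

lemma integrable_line (hφ : HasExpGrowth φ) (x v : E) :
    Integrable (fun z : ℝ => φ (x + z • v)) stdGauss :=
  (hφ.line x v).integrable

lemma continuous_integral_line (hφ : HasExpGrowth φ) (v : E) :
    Continuous fun x => ∫ z, φ (x + z • v) ∂stdGauss := by
  refine continuous_iff_continuousAt.2 fun x => ?_
  obtain ⟨g, hg, hφg⟩ := hφ.exists_integrable_bound v (‖x‖ + 1)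
  have hnear : ∀ᶠ y in nhds x, ‖y‖ ≤ ‖x‖ + 1 :=
    (continuous_norm.tendsto x).eventually_le_const (lt_add_one _)
  refine continuousAt_of_dominated
    (Eventually.of_forall fun y => (hφ.line y v).1.aestronglyMeasurable)
    (hnear.mono fun y hy => Eventually.of_forall fun z => hφg y hy z) hg
    (Eventually.of_forall fun z => ?_)
  exact (hφ.1.comp (continuous_id.add continuous_const)).continuousAt

lemma integral_mul_stdGauss {f f' : ℝ → ℝ} (hf : HasExpGrowth f) (hf' : HasExpGrowth f')
    (hderiv : ∀ z, HasDerivAt f (f' z) z) : ∫ z, z * f z ∂stdGauss = ∫ z, f' z ∂stdGauss := by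
  simpa [stdGauss] using integral_sub_mul_gaussianReal (μ := 0) (v := 1) hderiv hf.integrable
    hf'.integrable (by simpa [stdGauss] using (HasExpGrowth.id.mul hf).integrable)

end HasExpGrowth

variable [NormedSpace ℝ E]

lemma hasDerivAt_line {f : E → ℝ} {f' : ℝ} {x v : E} {t : ℝ}
    (hf : HasLineDerivAt ℝ f f' (x + t • v) v) : HasDerivAt (fun s : ℝ => f (x + s • v)) f' t := by
  have hshift : HasDerivAt (fun s : ℝ => f (x + t • v + (s - t) • v)) f' t := by
    refine HasDerivAt.comp_sub_const (f := fun s => f (x + t • v + s • v)) t t ?_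
    rw [sub_self]
    exact hf
  simpa only [add_assoc, ← add_smul, add_sub_cancel] using hshift

lemma lipschitzWith_of_hasLineDerivAt {f : E → ℝ} {f' : E → E → ℝ} {C : ℝ≥0}
    (hf : ∀ x v, HasLineDerivAt ℝ f (f' x v) x v) (hC : ∀ x v, |f' x v| ≤ C * ‖v‖) :
    LipschitzWith C f := by
  refine LipschitzWith.of_dist_le_mul fun y x => ?_
  have hmvt := norm_image_sub_le_of_norm_deriv_le_segment_01'
    (f := fun t : ℝ => f (x + t • (y - x))) (C := C * ‖y - x‖)
    (fun t _ => (hasDerivAt_line (hf _ _)).hasDerivWithinAt) (fun t _ => hC _ _)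
  simpa [Real.dist_eq, dist_eq_norm] using hmvt

lemma hasLineDerivAt_integral_line {φ φ' : E → ℝ} {v : E} (hφ : HasExpGrowth φ)
    (hφ' : HasExpGrowth φ') (hderiv : ∀ x, HasLineDerivAt ℝ φ (φ' x) x v) (w x : E) :
    HasLineDerivAt ℝ (fun y => ∫ z, φ (y + z • w) ∂stdGauss) (∫ z, φ' (x + z • w) ∂stdGauss)
      x v := by
  obtain ⟨g, hg, hφg⟩ := hφ'.exists_integrable_bound w (‖x‖ + ‖v‖)
  have hswap (t z : ℝ) : x + t • v + z • w = x + z • w + t • v := add_right_comm _ _ _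
  have hmain := hasDerivAt_integral_of_dominated_loc_of_deriv_le (μ := stdGauss)
    (F := fun t z => φ (x + t • v + z • w)) (F' := fun t z => φ' (x + t • v + z • w))
    (x₀ := (0 : ℝ)) (s := Metric.ball 0 1) (bound := g) (Metric.ball_mem_nhds _ one_pos)
    (Eventually.of_forall fun t => (hφ.line _ _).1.aestronglyMeasurable)
    (by simpa using hφ.integrable_line x w) (hφ'.line _ _).1.aestronglyMeasurable
    (Eventually.of_forall fun z t ht => hφg _ ?_ z) hg
    (Eventually.of_forall fun z t _ => ?_)
  · simpa [HasLineDerivAt] using hmain.2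
  · rw [Metric.mem_ball, dist_zero_right] at ht
    refine (norm_add_le _ _).trans (add_le_add_right ?_ _)
    rw [norm_smul]
    exact mul_le_of_le_one_left (norm_nonneg v) ht.le
  · simp only [hswap]
    exact hasDerivAt_line (hderiv _)

end ExpGrowth

/-! ## Exponential means -/

section LogMean

variable {Ω : Type*} {mΩ : MeasurableSpace Ω} {μ : Measure Ω} {m : ℝ} {X Y : Ω → ℝ}

/-- The exponential mean `m⁻¹ log E exp (m X)` of a random variable, extended to `m = 0` by its
limit `E X`. -/
def logMean (μ : Measure Ω) (m : ℝ) (X : Ω → ℝ) : ℝ :=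
  if m = 0 then ∫ ω, X ω ∂μ else m⁻¹ * cgf X μ m

variable [IsProbabilityMeasure μ]

lemma logMean_le_add_const (hm : 0 ≤ m) (hX : Integrable X μ) (hY : Integrable Y μ)
    (hexpX : Integrable (fun ω => Real.exp (m * X ω)) μ)
    (hexpY : Integrable (fun ω => Real.exp (m * Y ω)) μ) {c : ℝ} (hXY : ∀ ω, X ω ≤ Y ω + c) :
    logMean μ m X ≤ logMean μ m Y + c := by
  unfold logMean
  split_ifs with h
  · refine (integral_mono hX (hY.add (integrable_const c)) hXY).trans_eq ?_
    rw [integral_add' hY (integrable_const c)]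
    simp
  have hm' : 0 < m := hm.lt_of_ne' h
  have hmgf : mgf X μ m ≤ Real.exp (m * c) * mgf Y μ m := by
    rw [mul_comm, ← mgf_add_const]
    refine mgf_mono_of_nonneg (Eventually.of_forall hXY) hm ?_
    simpa only [mul_add, Real.exp_add] using hexpY.mul_const _
  have hcgf : cgf X μ m ≤ m * c + cgf Y μ m := by
    rw [← Real.exp_le_exp, Real.exp_add, exp_cgf hexpX, exp_cgf hexpY]
    exact hmgf
  rw [inv_mul_le_iff₀ hm']
  linarith [mul_add m (m⁻¹ * cgf Y μ m) c, mul_inv_cancel_left₀ h (cgf Y μ m)]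

-- Jensen's inequality for the measure tilted by `m * Y`, the Gibbs measure at which `logMean` is
-- linearised.
theorem logMean_add_integral_tilted_le (hm : 0 ≤ m) (hX : Integrable X μ) (hY : Integrable Y μ)
    (hexpX : Integrable (fun ω => Real.exp (m * X ω)) μ)
    (hexpY : Integrable (fun ω => Real.exp (m * Y ω)) μ)
    (hsub : Integrable (fun ω => X ω - Y ω) (μ.tilted fun ω => m * Y ω)) :
    logMean μ m Y + ∫ ω, X ω - Y ω ∂μ.tilted (fun ω => m * Y ω) ≤ logMean μ m X := by
  obtain rfl | h := eq_or_ne m 0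
  · simp [logMean, integral_sub hX hY]
  have hm' : 0 < m := hm.lt_of_ne' h
  set ν := μ.tilted fun ω => m * Y ω with hν
  have : IsProbabilityMeasure ν := isProbabilityMeasure_tilted hexpY
  have hfactor (ω : Ω) : Real.exp (m * Y ω) * Real.exp (m * (X ω - Y ω)) = Real.exp (m * X ω) := by
    rw [← Real.exp_add]
    ring_nf
  have hexp_sub : Integrable (fun ω => Real.exp (m * (X ω - Y ω))) ν := by
    rw [hν, integrable_tilted_iff hexpY]
    simpa only [smul_eq_mul, hfactor] using hexpX
  have hjensen : Real.exp (m * ∫ ω, X ω - Y ω ∂ν) ≤ mgf X μ m / mgf Y μ m := by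
    rw [← integral_const_mul]
    refine (convexOn_exp.map_integral_le Real.continuous_exp.continuousOn isClosed_univ
      (Eventually.of_forall fun _ => Set.mem_univ _) (hsub.const_mul m) hexp_sub).trans_eq ?_
    rw [hν, integral_exp_tilted]
    simp only [Pi.add_apply, Real.exp_add, hfactor, mgf]
  have hcgf : cgf Y μ m + m * ∫ ω, X ω - Y ω ∂ν ≤ cgf X μ m := by
    rw [← Real.exp_le_exp, Real.exp_add, exp_cgf hexpX, exp_cgf hexpY, mul_comm]
    exact (le_div_iff₀ (mgf_pos hexpY)).1 hjensen
  rw [logMean, logMean, if_neg h, if_neg h, le_inv_mul_iff₀ hm', mul_add, mul_inv_cancel_left₀ h]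
  exact hcgf

end LogMean

/-! ## Gaussian steps -/

section GaussStep

open scoped NNReal

variable {E : Type*} [NormedAddCommGroup E] [NormedSpace ℝ E]

/-- One step of a Parisi-type recursion on a vector space: the exponential mean of `L` over a
Gaussian displacement along `v`. The one-dimensional recursion `pStep` is the case `E = ℝ`. -/
def gaussStep (m : ℝ) (v : E) (L : E → ℝ) (x : E) : ℝ :=
  logMean stdGauss m fun z => L (x + z • v)

/-- The mean of `φ` over a Gaussian displacement along `v` reweighted by `exp (m L)`. It is the
linearisation of `gaussStep m v` at `L`. -/
def tiltedMean (m : ℝ) (v : E) (L φ : E → ℝ) (x : E) : ℝ :=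
  ∫ z, φ (x + z • v) ∂stdGauss.tilted fun z => m * L (x + z • v)

lemma pStep_eq_gaussStep (m s : ℝ) (g : ℝ → ℝ) : pStep m s g = gaussStep m (√s) g := rfl

lemma gaussStep_zero_left (v : E) (L : E → ℝ) (x : E) :
    gaussStep 0 v L x = ∫ z, L (x + z • v) ∂stdGauss :=
  if_pos rfl

lemma gaussStep_zero_right (m : ℝ) (L : E → ℝ) : gaussStep m 0 L = L := by
  funext x
  by_cases h : m = 0 <;> simp [gaussStep, logMean, h]

lemma hasLineDerivAt_exp_mul {L φ : E → ℝ} {L' φ' : ℝ} {x v : E} (m : ℝ)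
    (hL : HasLineDerivAt ℝ L L' x v) (hφ : HasLineDerivAt ℝ φ φ' x v) :
    HasLineDerivAt ℝ (fun y => Real.exp (m * L y) * φ y)
      (Real.exp (m * L x) * (φ' + m * φ x * L')) x v := by
  refine ((HasDerivAt.const_mul m hL).exp.mul hφ).congr_deriv ?_
  simp only [zero_smul, add_zero]
  ring

variable {m : ℝ} {L : E → ℝ} {K : ℝ≥0} {v x : E}

lemma integrable_exp_line (hL : LipschitzWith K L) (m : ℝ) (v x : E) :
    Integrable (fun z : ℝ => Real.exp (m * L (x + z • v))) stdGauss :=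
  (HasExpGrowth.exp_mul_of_lipschitzWith hL m).integrable_line x v

lemma isProbabilityMeasure_tilted_line (hL : LipschitzWith K L) (m : ℝ) (v x : E) :
    IsProbabilityMeasure (stdGauss.tilted fun z => m * L (x + z • v)) :=
  isProbabilityMeasure_tilted (integrable_exp_line hL m v x)

lemma integrable_tilted_line (hL : LipschitzWith K L) (m : ℝ) (v x : E) {f : ℝ → ℝ}
    (hf : HasExpGrowth f) : Integrable f (stdGauss.tilted fun z => m * L (x + z • v)) :=
  (integrable_tilted_iff (integrable_exp_line hL m v x) f).2
    (((HasExpGrowth.exp_mul_of_lipschitzWith hL m).line x v).mul hf).integrable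

lemma integral_tilted_line (m : ℝ) (L : E → ℝ) (v x : E) (f : ℝ → ℝ) :
    ∫ z, f z ∂stdGauss.tilted (fun z => m * L (x + z • v))
      = (∫ z, Real.exp (m * L (x + z • v)) * f z ∂stdGauss)
        / ∫ z, Real.exp (m * L (x + z • v)) ∂stdGauss := by
  rw [integral_tilted, ← integral_div]
  exact integral_congr_ae (Eventually.of_forall fun z => by simp only [smul_eq_mul]; ring)

section Comparison

variable {E' : Type*} [NormedAddCommGroup E'] [NormedSpace ℝ E'] {L' : E' → ℝ} {K' : ℝ≥0}
  {v' x' : E'}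

lemma gaussStep_le_add_const (hm : 0 ≤ m) (hL : LipschitzWith K L) (hL' : LipschitzWith K' L')
    {c : ℝ} (hle : ∀ z : ℝ, L (x + z • v) ≤ L' (x' + z • v') + c) :
    gaussStep m v L x ≤ gaussStep m v' L' x' + c :=
  logMean_le_add_const hm ((HasExpGrowth.of_lipschitzWith hL).integrable_line x v)
    ((HasExpGrowth.of_lipschitzWith hL').integrable_line x' v') (integrable_exp_line hL m v x)
    (integrable_exp_line hL' m v' x') hle

lemma gaussStep_add_integral_tilted_le (hm : 0 ≤ m) (hL : LipschitzWith K L)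
    (hL' : LipschitzWith K' L') (v x : E) (v' x' : E') :
    gaussStep m v L x
        + ∫ z, L' (x' + z • v') - L (x + z • v) ∂stdGauss.tilted (fun z => m * L (x + z • v))
      ≤ gaussStep m v' L' x' := by
  have hgrowth := HasExpGrowth.of_lipschitzWith hL
  have hgrowth' := HasExpGrowth.of_lipschitzWith hL'
  exact logMean_add_integral_tilted_le hm (hgrowth'.integrable_line x' v')
    (hgrowth.integrable_line x v) (integrable_exp_line hL' m v' x') (integrable_exp_line hL m v x)
    ((integrable_tilted_line hL m v x (hgrowth'.line x' v')).sub
      (integrable_tilted_line hL m v x (hgrowth.line x v)))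

end Comparison

lemma lipschitzWith_gaussStep (hm : 0 ≤ m) (hL : LipschitzWith K L) (v : E) :
    LipschitzWith K (gaussStep m v L) :=
  LipschitzWith.of_le_add_mul K fun x y => gaussStep_le_add_const hm hL hL fun z => by
    simpa only [dist_add_right] using hL.le_add_mul (x + z • v) (y + z • v)

lemma tiltedMean_const (hL : LipschitzWith K L) (m : ℝ) (v : E) (c : ℝ) (x : E) :
    tiltedMean m v L (fun _ => c) x = c := by
  have := isProbabilityMeasure_tilted_line hL m v x
  simp [tiltedMean]

lemma tiltedMean_const_mul (m : ℝ) (v : E) (L φ : E → ℝ) (c : ℝ) (x : E) :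
    tiltedMean m v L (fun y => c * φ y) x = c * tiltedMean m v L φ x :=
  integral_const_mul _ _

lemma tiltedMean_add (hL : LipschitzWith K L) {φ ψ : E → ℝ} (hφ : HasExpGrowth φ)
    (hψ : HasExpGrowth ψ) (m : ℝ) (v x : E) :
    tiltedMean m v L (fun y => φ y + ψ y) x = tiltedMean m v L φ x + tiltedMean m v L ψ x :=
  integral_add (integrable_tilted_line hL m v x (hφ.line x v))
    (integrable_tilted_line hL m v x (hψ.line x v))

lemma tiltedMean_sub (hL : LipschitzWith K L) {φ ψ : E → ℝ} (hφ : HasExpGrowth φ)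
    (hψ : HasExpGrowth ψ) (m : ℝ) (v x : E) :
    tiltedMean m v L (fun y => φ y - ψ y) x = tiltedMean m v L φ x - tiltedMean m v L ψ x :=
  integral_sub (integrable_tilted_line hL m v x (hφ.line x v))
    (integrable_tilted_line hL m v x (hψ.line x v))

lemma tiltedMean_sum (hL : LipschitzWith K L) {ι : Type*} (s : Finset ι) {φ : ι → E → ℝ}
    (hφ : ∀ i ∈ s, HasExpGrowth (φ i)) (m : ℝ) (v x : E) :
    tiltedMean m v L (fun y => ∑ i ∈ s, φ i y) x = ∑ i ∈ s, tiltedMean m v L (φ i) x :=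
  integral_finsetSum s fun i hi => integrable_tilted_line hL m v x ((hφ i hi).line x v)

lemma tiltedMean_nonneg {φ : E → ℝ} (hφ : ∀ y, 0 ≤ φ y) (m : ℝ) (v : E) (L : E → ℝ) (x : E) :
    0 ≤ tiltedMean m v L φ x :=
  integral_nonneg fun _ => hφ _

lemma abs_tiltedMean_le (hL : LipschitzWith K L) {φ : E → ℝ} {B : ℝ} (hφ : ∀ y, |φ y| ≤ B)
    (m : ℝ) (v x : E) : |tiltedMean m v L φ x| ≤ B := by
  have := isProbabilityMeasure_tilted_line hL m v x
  refine (norm_integral_le_of_norm_le_const (Eventually.of_forall fun z =>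
    (Real.norm_eq_abs _).trans_le (hφ (x + z • v)))).trans_eq ?_
  rw [probReal_univ, mul_one]

lemma tiltedMean_eq_div (m : ℝ) (v : E) (L φ : E → ℝ) (x : E) :
    tiltedMean m v L φ x = (∫ z, Real.exp (m * L (x + z • v)) * φ (x + z • v) ∂stdGauss)
      / ∫ z, Real.exp (m * L (x + z • v)) ∂stdGauss :=
  integral_tilted_line m L v x _

lemma integral_exp_line_ne_zero (hL : LipschitzWith K L) (m : ℝ) (v x : E) :
    ∫ z, Real.exp (m * L (x + z • v)) ∂stdGauss ≠ 0 :=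
  (integral_exp_pos (integrable_exp_line hL m v x)).ne'

lemma continuous_tiltedMean (hL : LipschitzWith K L) {φ : E → ℝ} (hφ : HasExpGrowth φ) (m : ℝ)
    (v : E) : Continuous (tiltedMean m v L φ) := by
  have hexp := HasExpGrowth.exp_mul_of_lipschitzWith hL m
  rw [funext (tiltedMean_eq_div m v L φ)]
  exact ((hexp.mul hφ).continuous_integral_line v).div (hexp.continuous_integral_line v)
    (integral_exp_line_ne_zero hL m v)

section Derivative

variable {L' φ φ' : E → ℝ}

lemma hasLineDerivAt_integral_exp_line (hL : LipschitzWith K L) (hL' : HasExpGrowth L')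
    (hLderiv : ∀ y, HasLineDerivAt ℝ L (L' y) y v) (hφ : HasExpGrowth φ) (hφ' : HasExpGrowth φ')
    (hφderiv : ∀ y, HasLineDerivAt ℝ φ (φ' y) y v) (m : ℝ) (w x : E) :
    HasLineDerivAt ℝ (fun y => ∫ z, Real.exp (m * L (y + z • w)) * φ (y + z • w) ∂stdGauss)
      (tiltedMean m w L (fun y => φ' y + m * φ y * L' y) x
        * ∫ z, Real.exp (m * L (x + z • w)) ∂stdGauss) x v := by
  have hexp := HasExpGrowth.exp_mul_of_lipschitzWith hL m
  rw [tiltedMean_eq_div, div_mul_cancel₀ _ (integral_exp_line_ne_zero hL m w x)]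
  exact hasLineDerivAt_integral_line (hexp.mul hφ)
    (hexp.mul (hφ'.add (((HasExpGrowth.const m).mul hφ).mul hL')))
    (fun y => hasLineDerivAt_exp_mul m (hLderiv y) (hφderiv y)) w x

lemma hasLineDerivAt_integral_exp (hL : LipschitzWith K L) (hL' : HasExpGrowth L')
    (hLderiv : ∀ y, HasLineDerivAt ℝ L (L' y) y v) (m : ℝ) (w x : E) :
    HasLineDerivAt ℝ (fun y => ∫ z, Real.exp (m * L (y + z • w)) ∂stdGauss)
      (m * tiltedMean m w L L' x * ∫ z, Real.exp (m * L (x + z • w)) ∂stdGauss) x v := by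
  have hone := hasLineDerivAt_integral_exp_line hL hL' hLderiv (HasExpGrowth.const 1)
    (HasExpGrowth.const 0) (fun _ => hasDerivAt_const _ _) m w x
  simpa only [mul_one, zero_add, tiltedMean_const_mul] using hone

lemma hasLineDerivAt_gaussStep (hL : LipschitzWith K L) (hL' : HasExpGrowth L')
    (hLderiv : ∀ y, HasLineDerivAt ℝ L (L' y) y v) (m : ℝ) (w x : E) :
    HasLineDerivAt ℝ (gaussStep m w L) (tiltedMean m w L L' x) x v := by
  obtain rfl | h := eq_or_ne m 0
  · rw [funext (gaussStep_zero_left w L)]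
    simpa [tiltedMean] using hasLineDerivAt_integral_line (HasExpGrowth.of_lipschitzWith hL) hL'
      hLderiv w x
  have hpos := integral_exp_line_ne_zero hL m w x
  have hlog := ((hasLineDerivAt_integral_exp hL hL' hLderiv m w x).log
    (by simpa only [zero_smul, add_zero] using hpos)).const_mul m⁻¹
  have hstep : gaussStep m w L
      = fun y => m⁻¹ * Real.log (∫ z, Real.exp (m * L (y + z • w)) ∂stdGauss) :=
    funext fun y => if_neg h
  rw [hstep]
  refine hlog.congr_deriv ?_
  simp only [zero_smul, add_zero]
  field_simp

lemma hasLineDerivAt_tiltedMean (hL : LipschitzWith K L) (hL' : HasExpGrowth L')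
    (hLderiv : ∀ y, HasLineDerivAt ℝ L (L' y) y v) (hφ : HasExpGrowth φ) (hφ' : HasExpGrowth φ')
    (hφderiv : ∀ y, HasLineDerivAt ℝ φ (φ' y) y v) (m : ℝ) (w x : E) :
    HasLineDerivAt ℝ (tiltedMean m w L φ)
      (tiltedMean m w L (fun y => φ' y + m * φ y * L' y) x
        - m * tiltedMean m w L φ x * tiltedMean m w L L' x) x v := by
  have hpos := integral_exp_line_ne_zero hL m w x
  have hquot := (hasLineDerivAt_integral_exp_line hL hL' hLderiv hφ hφ' hφderiv m w x).div
    (hasLineDerivAt_integral_exp hL hL' hLderiv m w x)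
    (by simpa only [zero_smul, add_zero] using hpos)
  rw [funext (tiltedMean_eq_div m w L φ)]
  refine hquot.congr_deriv ?_
  simp only [zero_smul, add_zero]
  field_simp

-- Gaussian integration by parts: the density `exp (m L)` of the tilted measure contributes the
-- term `m φ L'`.
lemma integral_mul_tilted_line (hL : LipschitzWith K L) (hL' : HasExpGrowth L')
    (hLderiv : ∀ y, HasLineDerivAt ℝ L (L' y) y v) (hφ : HasExpGrowth φ) (hφ' : HasExpGrowth φ')
    (hφderiv : ∀ y, HasLineDerivAt ℝ φ (φ' y) y v) (m : ℝ) (x : E) :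
    ∫ z, z * φ (x + z • v) ∂stdGauss.tilted (fun z => m * L (x + z • v))
      = tiltedMean m v L (fun y => φ' y + m * φ y * L' y) x := by
  have hexp := HasExpGrowth.exp_mul_of_lipschitzWith hL m
  rw [integral_tilted_line, tiltedMean_eq_div]
  congr 1
  simp only [mul_left_comm (Real.exp _)]
  exact HasExpGrowth.integral_mul_stdGauss ((hexp.mul hφ).line x v)
    ((hexp.mul (hφ'.add (((HasExpGrowth.const m).mul hφ).mul hL'))).line x v)
    fun z => hasDerivAt_line (hasLineDerivAt_exp_mul m (hLderiv _) (hφderiv _))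

end Derivative

end GaussStep

/-! ## Potentials with gradient in the simplex -/

section SimplexPotential

open scoped NNReal Matrix

variable {ι : Type*} [Fintype ι]

lemma abs_dotProduct_le (u v : ι → ℝ) : |u ⬝ᵥ v| ≤ (∑ i, |u i|) * ‖v‖ := by
  rw [dotProduct, Finset.sum_mul]
  refine (Finset.abs_sum_le_sum_abs _ _).trans (Finset.sum_le_sum fun i _ => ?_)
  rw [abs_mul]
  exact mul_le_mul_of_nonneg_left (norm_le_pi_norm v i) (abs_nonneg _)

lemma HasExpGrowth.dotProduct_const {E : Type*} [NormedAddCommGroup E] {φ : E → ι → ℝ}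
    (hφ : ∀ i, HasExpGrowth fun x => φ x i) (u : ι → ℝ) : HasExpGrowth fun x => φ x ⬝ᵥ u :=
  HasExpGrowth.sum _ fun i _ => (hφ i).mul (HasExpGrowth.const (u i))

/-- A twice differentiable function on `ι → ℝ` whose gradient is a probability vector and whose
Hessian is bounded. Log-sum-exp functions are of this type, and so are all functions obtained from
them by Gaussian steps; the gradient then plays the role of the Gibbs measure. -/
structure SimplexPotential (ι : Type*) [Fintype ι] where
  toFun : (ι → ℝ) → ℝ
  grad : (ι → ℝ) → ι → ℝ
  hess : (ι → ℝ) → Matrix ι ι ℝ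
  grad_nonneg : ∀ x i, 0 ≤ grad x i
  sum_grad : ∀ x, ∑ i, grad x i = 1
  hasLineDerivAt : ∀ x v, HasLineDerivAt ℝ toFun (grad x ⬝ᵥ v) x v
  hasLineDerivAt_grad : ∀ x i v, HasLineDerivAt ℝ (fun y => grad y i) (hess x i ⬝ᵥ v) x v
  continuous_hess : ∀ i j, Continuous fun x => hess x i j
  exists_abs_hess_le : ∃ B, ∀ x i j, |hess x i j| ≤ B

namespace SimplexPotential

instance : CoeFun (SimplexPotential ι) fun _ => (ι → ℝ) → ℝ := ⟨toFun⟩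

variable (S : SimplexPotential ι)

lemma grad_le_one (x : ι → ℝ) (i : ι) : S.grad x i ≤ 1 :=
  (Finset.single_le_sum (fun j _ => S.grad_nonneg x j) (Finset.mem_univ i)).trans_eq (S.sum_grad x)

lemma lipschitzWith : LipschitzWith 1 S :=
  lipschitzWith_of_hasLineDerivAt S.hasLineDerivAt fun x v => by
    simpa only [abs_of_nonneg (S.grad_nonneg x _), S.sum_grad, NNReal.coe_one] using
      abs_dotProduct_le (S.grad x) v

lemma hasExpGrowth_grad (i : ι) : HasExpGrowth fun x => S.grad x i := by
  obtain ⟨B, hB⟩ := S.exists_abs_hess_le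
  have hsum (x : ι → ℝ) : ∑ j, |S.hess x i j| ≤ ∑ _j : ι, |B| :=
    Finset.sum_le_sum fun j _ => (hB x i j).trans (le_abs_self B)
  have hlip : LipschitzWith (∑ _j : ι, |B|).toNNReal fun x => S.grad x i := by
    refine lipschitzWith_of_hasLineDerivAt (fun x v => S.hasLineDerivAt_grad x i v) fun x v => ?_
    rw [Real.coe_toNNReal _ (by positivity)]
    exact (abs_dotProduct_le _ v).trans (mul_le_mul_of_nonneg_right (hsum x) (norm_nonneg v))
  exact HasExpGrowth.of_lipschitzWith hlip

lemma hasExpGrowth_hess (i j : ι) : HasExpGrowth fun x => S.hess x i j := by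
  obtain ⟨B, hB⟩ := S.exists_abs_hess_le
  exact HasExpGrowth.of_abs_le (S.continuous_hess i j) fun x => hB x i j

/-- The matrix `Hess S + m ∇S ∇Sᵀ`, which is the Hessian of `exp (m S)` divided by `m exp (m S)`
when `m ≠ 0`. -/
def tiltedHess (m : ℝ) (x : ι → ℝ) : Matrix ι ι ℝ :=
  S.hess x + m • Matrix.vecMulVec (S.grad x) (S.grad x)

lemma tiltedHess_apply (m : ℝ) (x : ι → ℝ) (i j : ι) :
    S.tiltedHess m x i j = S.hess x i j + m * (S.grad x i * S.grad x j) := rfl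

lemma tiltedHess_dotProduct (m : ℝ) (x : ι → ℝ) (i : ι) (v : ι → ℝ) :
    S.tiltedHess m x i ⬝ᵥ v = S.hess x i ⬝ᵥ v + m * S.grad x i * (S.grad x ⬝ᵥ v) := by
  simp only [dotProduct, tiltedHess_apply, add_mul, Finset.sum_add_distrib, Finset.mul_sum,
    mul_assoc]

lemma hasExpGrowth_tiltedHess (m : ℝ) (i j : ι) : HasExpGrowth fun x => S.tiltedHess m x i j :=
  (S.hasExpGrowth_hess i j).add
    ((HasExpGrowth.const m).mul ((S.hasExpGrowth_grad i).mul (S.hasExpGrowth_grad j)))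

lemma exists_abs_tiltedHess_le (m : ℝ) : ∃ B, ∀ x i j, |S.tiltedHess m x i j| ≤ B := by
  obtain ⟨B, hB⟩ := S.exists_abs_hess_le
  refine ⟨B + |m|, fun x i j => (abs_add_le _ _).trans (add_le_add (hB x i j) ?_)⟩
  rw [Matrix.smul_apply, Matrix.vecMulVec_apply, smul_eq_mul, abs_mul,
    abs_of_nonneg (mul_nonneg (S.grad_nonneg x i) (S.grad_nonneg x j))]
  exact mul_le_of_le_one_right (abs_nonneg m)
    (mul_le_one₀ (S.grad_le_one x i) (S.grad_nonneg x j) (S.grad_le_one x j))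

/-- The second-order term `⟨A, Hess S + m ∇S ∇Sᵀ⟩` produced when a Gaussian field of covariance `A`
is integrated against a measure tilted by `exp (m S)`. -/
def curvature (m : ℝ) (A : Matrix ι ι ℝ) (x : ι → ℝ) : ℝ :=
  ∑ i, ∑ j, A i j * S.tiltedHess m x i j

lemma curvature_add (m : ℝ) (A B : Matrix ι ι ℝ) (x : ι → ℝ) :
    S.curvature m (A + B) x = S.curvature m A x + S.curvature m B x := by
  simp only [curvature, Matrix.add_apply, add_mul, Finset.sum_add_distrib]

lemma curvature_vecMulVec (m : ℝ) (u v x : ι → ℝ) :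
    S.curvature m (Matrix.vecMulVec u v) x = ∑ i, S.tiltedHess m x i ⬝ᵥ v * u i := by
  simp only [curvature, Matrix.vecMulVec_apply, dotProduct, Finset.sum_mul]
  refine Finset.sum_congr rfl fun i _ => Finset.sum_congr rfl fun j _ => by ring

lemma hasExpGrowth_curvature (m : ℝ) (A : Matrix ι ι ℝ) : HasExpGrowth (S.curvature m A) :=
  HasExpGrowth.sum _ fun i _ => HasExpGrowth.sum _ fun j _ =>
    (HasExpGrowth.const _).mul (S.hasExpGrowth_tiltedHess m i j)

lemma curvature_le_of_le (x : ι → ℝ) {A : Matrix ι ι ℝ} {M : ℝ} (hA : ∀ i j, A i j ≤ M)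
    {m₀ m : ℝ} (hm : m₀ ≤ m) : S.curvature m A x ≤ S.curvature m₀ A x + (m - m₀) * M := by
  have hquad : ∑ i, ∑ j, A i j * (S.grad x i * S.grad x j) ≤ M := by
    calc ∑ i, ∑ j, A i j * (S.grad x i * S.grad x j)
        ≤ ∑ i, ∑ j, M * (S.grad x i * S.grad x j) := by
          gcongr with i _ j _
          exacts [mul_nonneg (S.grad_nonneg x i) (S.grad_nonneg x j), hA i j]
      _ = M := by simp only [← Finset.mul_sum, S.sum_grad, mul_one]
  have hsplit : S.curvature m A x
      = S.curvature m₀ A x + (m - m₀) * ∑ i, ∑ j, A i j * (S.grad x i * S.grad x j) := by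
    simp only [curvature, tiltedHess_apply, Finset.mul_sum, ← Finset.sum_add_distrib]
    refine Finset.sum_congr rfl fun i _ => Finset.sum_congr rfl fun j _ => by ring
  rw [hsplit]
  gcongr

lemma tiltedMean_dotProduct {φ : (ι → ℝ) → ι → ℝ} (hφ : ∀ i, HasExpGrowth fun x => φ x i) (m : ℝ)
    (w u x : ι → ℝ) :
    tiltedMean m w S (fun y => φ y ⬝ᵥ u) x
      = (fun i => tiltedMean m w S (fun y => φ y i) x) ⬝ᵥ u := by
  simp only [dotProduct]
  rw [tiltedMean_sum S.lipschitzWith _ fun i _ => (hφ i).mul (HasExpGrowth.const (u i))]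
  simp only [mul_comm _ (u _), tiltedMean_const_mul]

lemma hasLineDerivAt_tiltedMean_grad (m : ℝ) (w x u : ι → ℝ) (i : ι) :
    HasLineDerivAt ℝ (tiltedMean m w S fun y => S.grad y i)
      ((fun j => tiltedMean m w S (fun y => S.tiltedHess m y i j) x
        - m * tiltedMean m w S (fun y => S.grad y i) x * tiltedMean m w S (fun y => S.grad y j) x)
        ⬝ᵥ u) x u := by
  refine (hasLineDerivAt_tiltedMean S.lipschitzWith
    (HasExpGrowth.dotProduct_const S.hasExpGrowth_grad u) (fun y => S.hasLineDerivAt y u)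
    (S.hasExpGrowth_grad i) (HasExpGrowth.dotProduct_const (S.hasExpGrowth_hess i) u)
    (fun y => S.hasLineDerivAt_grad y i u) m w x).congr_deriv ?_
  simp only [← tiltedHess_dotProduct]
  rw [S.tiltedMean_dotProduct (S.hasExpGrowth_tiltedHess m i),
    S.tiltedMean_dotProduct S.hasExpGrowth_grad]
  simp only [dotProduct, Finset.mul_sum, ← Finset.sum_sub_distrib, sub_mul, mul_assoc]

lemma exists_abs_step_hess_le (m : ℝ) (w : ι → ℝ) :
    ∃ B, ∀ x i j, |tiltedMean m w S (fun y => S.tiltedHess m y i j) x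
      - m * tiltedMean m w S (fun y => S.grad y i) x * tiltedMean m w S (fun y => S.grad y j) x|
      ≤ B := by
  obtain ⟨B, hB⟩ := S.exists_abs_tiltedHess_le m
  have hgrad (x : ι → ℝ) (i : ι) : |tiltedMean m w S (fun y => S.grad y i) x| ≤ 1 :=
    abs_tiltedMean_le S.lipschitzWith
      (fun y => abs_le.2 ⟨by linarith [S.grad_nonneg y i], S.grad_le_one y i⟩) m w x
  refine ⟨B + |m|, fun x i j => (abs_sub _ _).trans (add_le_add
    (abs_tiltedMean_le S.lipschitzWith (fun y => hB y i j) m w x) ?_)⟩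
  rw [abs_mul, abs_mul, mul_assoc]
  exact mul_le_of_le_one_right (abs_nonneg m) (mul_le_one₀ (hgrad x i) (abs_nonneg _) (hgrad x j))

/-- The potential obtained from `S` by a Gaussian step along `w`. -/
def step (m : ℝ) (w : ι → ℝ) : SimplexPotential ι where
  toFun := gaussStep m w S
  grad x i := tiltedMean m w S (fun y => S.grad y i) x
  hess x i j := tiltedMean m w S (fun y => S.tiltedHess m y i j) x
    - m * tiltedMean m w S (fun y => S.grad y i) x * tiltedMean m w S (fun y => S.grad y j) x
  grad_nonneg x i := tiltedMean_nonneg (fun y => S.grad_nonneg y i) m w S x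
  sum_grad x := by
    rw [← tiltedMean_sum S.lipschitzWith _ fun i _ => S.hasExpGrowth_grad i]
    simp only [S.sum_grad, tiltedMean_const S.lipschitzWith]
  hasLineDerivAt x u := by
    rw [← S.tiltedMean_dotProduct S.hasExpGrowth_grad]
    exact hasLineDerivAt_gaussStep S.lipschitzWith
      (HasExpGrowth.dotProduct_const S.hasExpGrowth_grad u) (fun y => S.hasLineDerivAt y u) m w x
  hasLineDerivAt_grad x i u := S.hasLineDerivAt_tiltedMean_grad m w x u i
  continuous_hess i j := by
    have hgrad (k : ι) := continuous_tiltedMean S.lipschitzWith (S.hasExpGrowth_grad k) m w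
    exact (continuous_tiltedMean S.lipschitzWith (S.hasExpGrowth_tiltedHess m i j) m w).sub
      ((continuous_const.mul (hgrad i)).mul (hgrad j))
  exists_abs_hess_le := S.exists_abs_step_hess_le m w

lemma coe_step (m : ℝ) (w : ι → ℝ) : (S.step m w : (ι → ℝ) → ℝ) = gaussStep m w S := rfl

lemma curvature_step (m : ℝ) (w : ι → ℝ) (A : Matrix ι ι ℝ) (x : ι → ℝ) :
    (S.step m w).curvature m A x = tiltedMean m w S (S.curvature m A) x := by
  have hhess (i j : ι) :
      (S.step m w).tiltedHess m x i j = tiltedMean m w S (fun y => S.tiltedHess m y i j) x := by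
    simp only [tiltedHess_apply, step]
    ring
  have hgrowth (i j : ι) : HasExpGrowth fun y => A i j * S.tiltedHess m y i j :=
    (HasExpGrowth.const _).mul (S.hasExpGrowth_tiltedHess m i j)
  unfold curvature
  rw [tiltedMean_sum S.lipschitzWith _ fun i _ => HasExpGrowth.sum _ fun j _ => hgrowth i j]
  simp only [tiltedMean_sum S.lipschitzWith _ fun j _ => hgrowth _ j, tiltedMean_const_mul, hhess]

-- Integration by parts along `w` converts the linear term `z ⟨u, ∇S⟩` into a covariance correction.
lemma integral_mul_grad_dotProduct (m : ℝ) (w u x : ι → ℝ) :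
    ∫ z, z * (S.grad (x + z • w) ⬝ᵥ u) ∂stdGauss.tilted (fun z => m * S (x + z • w))
      = (S.step m w).curvature m (Matrix.vecMulVec u w) x := by
  have hderiv (y : ι → ℝ) : HasLineDerivAt ℝ (fun y => S.grad y ⬝ᵥ u)
      (∑ i, S.hess y i ⬝ᵥ w * u i) y w :=
    HasDerivAt.fun_sum fun i _ => HasDerivAt.mul_const (S.hasLineDerivAt_grad y i w) (u i)
  rw [integral_mul_tilted_line S.lipschitzWith (HasExpGrowth.dotProduct_const S.hasExpGrowth_grad w)
    (fun y => S.hasLineDerivAt y w) (HasExpGrowth.dotProduct_const S.hasExpGrowth_grad u)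
    (HasExpGrowth.sum _ fun i _ => (HasExpGrowth.dotProduct_const (S.hasExpGrowth_hess i) w).mul
      (HasExpGrowth.const (u i))) hderiv, curvature_step]
  congr 1
  funext y
  rw [curvature_vecMulVec]
  simp only [tiltedHess_dotProduct, add_mul, Finset.sum_add_distrib]
  congr 1
  rw [dotProduct, Finset.mul_sum, Finset.sum_mul]
  refine Finset.sum_congr rfl fun i _ => by ring

lemma integral_tangentPlane (m v : ℝ) (A : Matrix ι ι ℝ) (w u d x : ι → ℝ) :
    ∫ z, (S.grad (x + z • w) ⬝ᵥ d + v - S.curvature m (A + Matrix.vecMulVec u w) (x + z • w)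
        + z * (S.grad (x + z • w) ⬝ᵥ u)) ∂stdGauss.tilted (fun z => m * S (x + z • w))
      = (S.step m w).grad x ⬝ᵥ d + v - (S.step m w).curvature m A x := by
  have hS := S.lipschitzWith
  have hgrad (u : ι → ℝ) := HasExpGrowth.dotProduct_const S.hasExpGrowth_grad u
  have hcurv := S.hasExpGrowth_curvature m (A + Matrix.vecMulVec u w)
  have hv := HasExpGrowth.const (E := ι → ℝ) v
  rw [integral_add
    (integrable_tilted_line hS m w x ((((hgrad d).add hv).sub hcurv).line x w))
    (integrable_tilted_line hS m w x (HasExpGrowth.id.mul ((hgrad u).line x w))),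
    S.integral_mul_grad_dotProduct]
  change tiltedMean m w S (fun p => S.grad p ⬝ᵥ d + v - S.curvature m _ p) x + _ = _
  rw [tiltedMean_sub hS ((hgrad d).add hv) hcurv, tiltedMean_add hS (hgrad d) hv,
    tiltedMean_const hS, S.tiltedMean_dotProduct S.hasExpGrowth_grad, ← curvature_step,
    curvature_add]
  simp only [step]
  ring

end SimplexPotential

end SimplexPotential

/-! ## Tangent bounds -/

section TangentBound

open scoped NNReal Matrix

variable {ι : Type*} [Fintype ι]

/-- `F` dominates, at every point, the tangent plane of `S` corrected by `v` and by the curvature of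
`S` against `A`. Here `A` collects the covariance corrections `(w' - w) wᵀ` of the Gaussian steps
still to be taken, along `w'` in `F` and along `w` in `S`; once none is left, `A = 0`, and the
bound on the diagonal reads `S + v ≤ F`. -/
def TangentBound (F : (ι → ℝ) → ℝ) (S : SimplexPotential ι) (A : Matrix ι ι ℝ) (m v : ℝ) : Prop :=
  ∀ x y, S x + S.grad x ⬝ᵥ (y - x) + v - S.curvature m A x ≤ F y

namespace TangentBound

variable {F : (ι → ℝ) → ℝ} {S : SimplexPotential ι} {A : Matrix ι ι ℝ} {m v : ℝ}

lemma of_le (h : TangentBound F S A m v) {m₀ M v₀ : ℝ} (hm : m₀ ≤ m) (hA : ∀ i j, A i j ≤ M)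
    (hv : v₀ ≤ v - (m - m₀) * M) : TangentBound F S A m₀ v₀ := fun x y => by
  linarith [h x y, S.curvature_le_of_le x hA hm]

theorem step {K : ℝ≥0} {w w' : ι → ℝ} (hm : 0 ≤ m) (hF : LipschitzWith K F)
    (h : TangentBound F S (A + Matrix.vecMulVec (w' - w) w) m v) :
    TangentBound (gaussStep m w' F) (S.step m w) A m v := fun x y => by
  have hgrad (u : ι → ℝ) := HasExpGrowth.dotProduct_const S.hasExpGrowth_grad u
  have hplane (z : ℝ) :
      S.grad (x + z • w) ⬝ᵥ (y - x) + v
          - S.curvature m (A + Matrix.vecMulVec (w' - w) w) (x + z • w)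
          + z * (S.grad (x + z • w) ⬝ᵥ (w' - w))
        ≤ F (y + z • w') - S (x + z • w) := by
    have hxy : y + z • w' - (x + z • w) = (y - x) + z • (w' - w) := by
      rw [smul_sub]
      abel
    have htangent := h (x + z • w) (y + z • w')
    rw [hxy, dotProduct_add, dotProduct_smul, smul_eq_mul] at htangent
    linarith
  have hmono := integral_mono
    (integrable_tilted_line S.lipschitzWith m w x
      (((((hgrad _).add (HasExpGrowth.const v)).sub (S.hasExpGrowth_curvature m _)).line x w).add
        (HasExpGrowth.id.mul ((hgrad _).line x w))))
    (integrable_tilted_line S.lipschitzWith m w x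
      (((HasExpGrowth.of_lipschitzWith hF).line y w').sub
        ((HasExpGrowth.of_lipschitzWith S.lipschitzWith).line x w))) hplane
  have hjensen := gaussStep_add_integral_tilted_le hm S.lipschitzWith hF w x w' y
  rw [SimplexPotential.coe_step]
  linarith [hmono, S.integral_tangentPlane m v A w (w' - w) (y - x) x]

end TangentBound

end TangentBound

/-! ## Log-sum-exp -/

section LogSumExp

open scoped Matrix

variable {ι : Type*}

lemma hasLineDerivAt_exp_apply (β : ℝ) (x v : ι → ℝ) (i : ι) :
    HasLineDerivAt ℝ (fun y : ι → ℝ => Real.exp (β * y i))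
      (β * (Real.exp (β * x i) * v i)) x v := by
  have happly : HasDerivAt (fun t : ℝ => (x + t • v) i) (v i) 0 := by
    simpa using ((hasDerivAt_id (0 : ℝ)).mul_const (v i)).const_add (x i)
  refine (happly.const_mul β).exp.congr_deriv ?_
  simp only [zero_smul, add_zero]
  ring

variable [Fintype ι]

/-- The Gibbs weights `exp (β x_i) / ∑_j exp (β x_j)`. -/
def softmax (β : ℝ) (x : ι → ℝ) (i : ι) : ℝ :=
  Real.exp (β * x i) / ∑ j, Real.exp (β * x j)

lemma softmax_nonneg (β : ℝ) (x : ι → ℝ) (i : ι) : 0 ≤ softmax β x i := by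
  unfold softmax
  positivity

variable [Nonempty ι]

lemma sum_exp_pos (β : ℝ) (x : ι → ℝ) : 0 < ∑ j, Real.exp (β * x j) :=
  Finset.sum_pos (fun _ _ => Real.exp_pos _) Finset.univ_nonempty

lemma sum_softmax (β : ℝ) (x : ι → ℝ) : ∑ i, softmax β x i = 1 := by
  simp only [softmax, ← Finset.sum_div]
  exact div_self (sum_exp_pos β x).ne'

lemma softmax_le_one (β : ℝ) (x : ι → ℝ) (i : ι) : softmax β x i ≤ 1 :=
  (Finset.single_le_sum (fun j _ => softmax_nonneg β x j) (Finset.mem_univ i)).trans_eq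
    (sum_softmax β x)

lemma continuous_softmax (β : ℝ) (i : ι) : Continuous fun x : ι → ℝ => softmax β x i := by
  unfold softmax
  exact Continuous.div (by fun_prop) (by fun_prop) fun x => (sum_exp_pos β x).ne'

lemma hasLineDerivAt_sum_exp (β : ℝ) (x v : ι → ℝ) :
    HasLineDerivAt ℝ (fun y : ι → ℝ => ∑ j, Real.exp (β * y j))
      (β * ((softmax β x ⬝ᵥ v) * ∑ j, Real.exp (β * x j))) x v := by
  refine (HasDerivAt.fun_sum fun j _ => hasLineDerivAt_exp_apply β x v j).congr_deriv ?_
  rw [← Finset.mul_sum, dotProduct, Finset.sum_mul]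
  congr 1
  refine Finset.sum_congr rfl fun j _ => ?_
  rw [softmax]
  field_simp [(sum_exp_pos β x).ne']

lemma hasLineDerivAt_softmax (β : ℝ) (x v : ι → ℝ) (i : ι) :
    HasLineDerivAt ℝ (fun y => softmax β y i)
      (β * (softmax β x i * v i - softmax β x i * (softmax β x ⬝ᵥ v))) x v := by
  have hsum := (sum_exp_pos β x).ne'
  refine (HasDerivAt.fun_div (hasLineDerivAt_exp_apply β x v i) (hasLineDerivAt_sum_exp β x v)
    (by simpa only [zero_smul, add_zero] using hsum)).congr_deriv ?_
  simp only [softmax, zero_smul, add_zero]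
  field_simp

variable [DecidableEq ι]

lemma abs_softmax_covariance_le_one (β : ℝ) (x : ι → ℝ) (i j : ι) :
    |(Matrix.diagonal (softmax β x) - Matrix.vecMulVec (softmax β x) (softmax β x)) i j| ≤ 1 := by
  rw [Matrix.sub_apply, Matrix.diagonal_apply, Matrix.vecMulVec_apply]
  have hi := softmax_nonneg β x i
  have hj := softmax_nonneg β x j
  have hprod : softmax β x i * softmax β x j ≤ 1 :=
    mul_le_one₀ (softmax_le_one β x i) hj (softmax_le_one β x j)
  have hprod₀ := mul_nonneg hi hj
  split_ifs
  · rw [abs_le]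
    constructor <;> linarith [softmax_le_one β x i]
  · rw [zero_sub, abs_neg, abs_of_nonneg hprod₀]
    exact hprod

/-- The log-sum-exp potential `β⁻¹ log ∑_i exp (β x_i)`, i.e. minus the free energy at inverse
temperature `β` of the energies `-x`. It approximates `max_i x_i` as `β → ∞`. -/
def lse {β : ℝ} (hβ : 0 < β) : SimplexPotential ι where
  toFun x := β⁻¹ * Real.log (∑ i, Real.exp (β * x i))
  grad := softmax β
  hess x := β • (Matrix.diagonal (softmax β x) - Matrix.vecMulVec (softmax β x) (softmax β x))
  grad_nonneg := softmax_nonneg β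
  sum_grad := sum_softmax β
  hasLineDerivAt x v := by
    have hsum := (sum_exp_pos β x).ne'
    refine (((hasLineDerivAt_sum_exp β x v).log
      (by simpa only [zero_smul, add_zero] using hsum)).const_mul β⁻¹).congr_deriv ?_
    simp only [zero_smul, add_zero]
    field_simp
  hasLineDerivAt_grad x i v := by
    refine (hasLineDerivAt_softmax β x v i).congr_deriv ?_
    simp only [dotProduct, Matrix.smul_apply, Matrix.sub_apply, Matrix.diagonal_apply,
      Matrix.vecMulVec_apply, smul_eq_mul, mul_assoc, sub_mul, ← Finset.mul_sum,
      Finset.sum_sub_distrib, ite_mul, zero_mul, Finset.sum_ite_eq, Finset.mem_univ, if_true]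
  continuous_hess i j := by
    have hcont (k : ι) := continuous_softmax (ι := ι) β k
    simp only [Matrix.smul_apply, Matrix.sub_apply, Matrix.diagonal_apply, Matrix.vecMulVec_apply]
    split_ifs <;> fun_prop
  exists_abs_hess_le := by
    refine ⟨β, fun x i j => ?_⟩
    rw [Matrix.smul_apply, smul_eq_mul, abs_mul, abs_of_pos hβ]
    exact mul_le_of_le_one_right hβ.le (abs_softmax_covariance_le_one β x i j)

variable {β : ℝ} (hβ : 0 < β)

lemma le_lse (x : ι → ℝ) (i : ι) : x i ≤ lse hβ x := by
  change x i ≤ β⁻¹ * Real.log (∑ j, Real.exp (β * x j))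
  rw [le_inv_mul_iff₀ hβ, Real.le_log_iff_exp_le (sum_exp_pos β x)]
  exact Finset.single_le_sum (f := fun j => Real.exp (β * x j)) (fun _ _ => (Real.exp_pos _).le)
    (Finset.mem_univ i)

lemma lse_le {x : ι → ℝ} {c : ℝ} (hx : ∀ i, x i ≤ c) :
    lse hβ x ≤ c + Real.log (Fintype.card ι) / β := by
  change β⁻¹ * Real.log (∑ j, Real.exp (β * x j)) ≤ _
  have hcard : (0 : ℝ) < Fintype.card ι := by exact_mod_cast Fintype.card_pos
  have hsum : ∑ j, Real.exp (β * x j) ≤ Fintype.card ι * Real.exp (β * c) := by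
    refine (Finset.sum_le_card_nsmul _ _ (Real.exp (β * c)) fun j _ => ?_).trans_eq ?_
    · gcongr
      exact hx j
    · simp
  rw [inv_mul_le_iff₀ hβ, mul_add, mul_div_cancel₀ _ hβ.ne', add_comm]
  refine (Real.log_le_log (sum_exp_pos β x) hsum).trans_eq ?_
  rw [Real.log_mul hcard.ne' (Real.exp_ne_zero _), Real.log_exp]

lemma lse_add_softmax_dotProduct_le (x y : ι → ℝ) :
    lse hβ x + softmax β x ⬝ᵥ (y - x) ≤ lse hβ y := by
  change β⁻¹ * Real.log (∑ j, Real.exp (β * x j)) + _ ≤ β⁻¹ * Real.log (∑ j, Real.exp (β * y j))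
  have hratio : ∑ i, softmax β x i * Real.exp (β * (y - x) i)
      = (∑ j, Real.exp (β * y j)) / ∑ j, Real.exp (β * x j) := by
    rw [Finset.sum_div]
    refine Finset.sum_congr rfl fun i _ => ?_
    rw [softmax, div_mul_eq_mul_div, ← Real.exp_add, Pi.sub_apply]
    ring_nf
  have hjensen := convexOn_exp.map_sum_le (t := Finset.univ) (w := softmax β x)
    (p := fun i => β * (y - x) i) (fun i _ => softmax_nonneg β x i) (sum_softmax β x)
    fun _ _ => Set.mem_univ _
  simp only [smul_eq_mul, hratio] at hjensen
  rw [← Real.le_log_iff_exp_le (div_pos (sum_exp_pos β y) (sum_exp_pos β x)),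
    Real.log_div (sum_exp_pos β y).ne' (sum_exp_pos β x).ne'] at hjensen
  simp only [mul_left_comm _ β, ← Finset.mul_sum] at hjensen
  rw [le_inv_mul_iff₀ hβ, mul_add, mul_inv_cancel_left₀ hβ.ne', dotProduct]
  linarith

lemma curvature_lse (A : Matrix ι ι ℝ) (x : ι → ℝ) :
    (lse hβ).curvature β A x = β * ∑ i, softmax β x i * A i i := by
  have htilted : (lse hβ).tiltedHess β x = β • Matrix.diagonal (softmax β x) := by
    simp only [SimplexPotential.tiltedHess, lse, ← smul_add, sub_add_cancel]
  simp only [SimplexPotential.curvature, htilted, Matrix.smul_apply, Matrix.diagonal_apply,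
    smul_eq_mul, mul_ite, mul_zero, Finset.sum_ite_eq, Finset.mem_univ, if_true, Finset.mul_sum]
  exact Finset.sum_congr rfl fun i _ => by ring

lemma tangentBound_lse {A : Matrix ι ι ℝ} {d : ℝ} (hA : ∀ i, d ≤ A i i) :
    TangentBound (lse hβ) (lse hβ) A β (β * d) := fun x y => by
  have hdiag : d ≤ ∑ i, softmax β x i * A i i := by
    calc d = ∑ i, softmax β x i * d := by rw [← Finset.sum_mul, sum_softmax, one_mul]
      _ ≤ ∑ i, softmax β x i * A i i := by
          gcongr with i
          exacts [softmax_nonneg β x i, hA i]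
  rw [curvature_lse]
  have hconvex := lse_add_softmax_dotProduct_le hβ x y
  have hgrad : (lse hβ).grad x = softmax β x := rfl
  rw [hgrad]
  nlinarith

end LogSumExp

/-! ## Blocks of Gaussian steps -/

section Block

open scoped NNReal Matrix

lemma integrable_comp_of_lipschitzWith {E Ω : Type*} [NormedAddCommGroup E] [MeasurableSpace Ω]
    {μ : Measure Ω} [IsFiniteMeasure μ] {K : ℝ≥0} {L : E → ℝ} (hL : LipschitzWith K L) {f : Ω → E}
    (hf : Integrable f μ) : Integrable (fun ω => L (f ω)) μ :=
  ((hf.norm.add (integrable_const 1)).const_mul (|L 0| + K)).mono'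
    (hL.continuous.comp_aestronglyMeasurable hf.aestronglyMeasurable)
    (Eventually.of_forall fun ω => abs_le_mul_norm_add_one_of_lipschitzWith hL (f ω))

section Update

variable {κ : Type*} [Fintype κ] [DecidableEq κ] {X : κ → Type*} [∀ i, MeasurableSpace (X i)]
  (μ : ∀ i, Measure (X i)) [∀ i, IsProbabilityMeasure (μ i)]

lemma measurePreserving_update (k : κ) :
    MeasurePreserving (fun p : (∀ i, X i) × X k => Function.update p.1 k p.2)
      ((Measure.pi μ).prod (μ k)) (Measure.pi μ) := by
  refine ⟨measurable_update', (Measure.pi_eq fun s hs => ?_).symm⟩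
  have hpreimage : (fun p : (∀ i, X i) × X k => Function.update p.1 k p.2) ⁻¹' Set.univ.pi s
      = Set.univ.pi (Function.update s k Set.univ) ×ˢ s k := by
    ext p
    simp only [Set.mem_preimage, Set.mem_univ_pi, Set.mem_prod,
      Function.forall_update_iff p.1 fun i y => y ∈ s i,
      Function.forall_update_iff s fun i t => p.1 i ∈ t, Set.mem_univ, true_and]
    exact and_comm
  rw [Measure.map_apply measurable_update' (MeasurableSet.univ_pi hs), hpreimage,
    Measure.prod_prod, Measure.pi_pi, ← Finset.prod_erase_mul _ _ (Finset.mem_univ k),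
    ← Finset.prod_erase_mul _ _ (Finset.mem_univ k), Function.update_self, measure_univ, mul_one]
  congr 1
  refine Finset.prod_congr rfl fun i hi => ?_
  rw [Function.update_of_ne (Finset.ne_of_mem_erase hi)]

variable {μ}

lemma integral_pi_eq_integral_integral_update {f : (∀ i, X i) → ℝ}
    (hf : Integrable f (Measure.pi μ)) (k : κ) :
    ∫ z, f z ∂Measure.pi μ = ∫ t, ∫ z, f (Function.update z k t) ∂Measure.pi μ ∂μ k := by
  have hupdate := measurePreserving_update μ k
  have hcomp := hupdate.integrable_comp_of_integrable hf
  refine Eq.trans ?_ (integral_prod_symm _ hcomp)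
  conv_lhs => rw [← hupdate.map_eq]
  exact integral_map hupdate.measurable.aemeasurable
    (hupdate.map_eq.symm ▸ hf.aestronglyMeasurable)

end Update

variable {ι κ : Type*} [Fintype ι] (b : κ → ι → ℝ) (l : List κ)

lemma integrable_sum_smul [Fintype κ] :
    Integrable (fun z : κ → ℝ => (l.map fun k => z k • b k).sum)
      (Measure.pi fun _ => stdGauss) := by
  induction l with
  | nil => simp
  | cons k l ih =>
    exact Integrable.add ((integrable_comp_eval (μ := fun _ => stdGauss) (i := k)
      HasExpGrowth.id.integrable).smul_const (b k)) ih

namespace SimplexPotential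

variable (S : SimplexPotential ι)

/-- The potential obtained from `S` by Gaussian steps along the vectors `c • b k`, for `k` in the
list `l`. The amplitude `c` is kept apart because it is what the interpolation varies. -/
def block (m c : ℝ) : SimplexPotential ι :=
  l.foldr (fun k T => T.step m (c • b k)) S

lemma coe_block_zero_amplitude (m : ℝ) : (S.block b l m 0 : (ι → ℝ) → ℝ) = S := by
  induction l with
  | nil => rfl
  | cons k l ih =>
    change gaussStep m ((0 : ℝ) • b k) (S.block b l m 0) = S
    rw [zero_smul, gaussStep_zero_right, ih]

variable {l}

lemma block_zero_eq_integral [Fintype κ] (hl : l.Nodup) (x : ι → ℝ) :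
    S.block b l 0 1 x
      = ∫ z : κ → ℝ, S (x + (l.map fun k => z k • b k).sum) ∂Measure.pi fun _ => stdGauss := by
  classical
  induction l generalizing x with
  | nil => simp [block]
  | cons k l ih =>
    obtain ⟨hk, hl⟩ := List.nodup_cons.1 hl
    have hint := integrable_comp_of_lipschitzWith S.lipschitzWith
      ((integrable_const x).add (integrable_sum_smul b (k :: l)))
    have hsum (z : κ → ℝ) (t : ℝ) :
        x + ((k :: l).map fun i => Function.update z k t i • b i).sum
          = x + t • b k + (l.map fun i => z i • b i).sum := by
      rw [List.map_cons, List.sum_cons, Function.update_self, ← add_assoc]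
      congr 2
      refine List.map_congr_left fun i hi => ?_
      rw [Function.update_of_ne (ne_of_mem_of_not_mem hi hk)]
    calc S.block b (k :: l) 0 1 x
        = ∫ t, S.block b l 0 1 (x + t • b k) ∂stdGauss := by
          change gaussStep 0 ((1 : ℝ) • b k) (S.block b l 0 1) x = _
          rw [gaussStep_zero_left, one_smul]
      _ = ∫ t, ∫ z : κ → ℝ, S (x + ((k :: l).map fun i => Function.update z k t i • b i).sum)
            ∂(Measure.pi fun _ => stdGauss) ∂stdGauss := by
          simp only [ih hl, hsum]
      _ = ∫ z : κ → ℝ, S (x + ((k :: l).map fun i => z i • b i).sum)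
            ∂Measure.pi fun _ => stdGauss := by
          exact (integral_pi_eq_integral_integral_update hint k).symm

end SimplexPotential

variable {b l}

theorem TangentBound.block {S T : SimplexPotential ι} {A : Matrix ι ι ℝ} {m v c c' : ℝ}
    (hm : 0 ≤ m) (h : TangentBound T S
      (A + ((c' - c) * c) • (l.map fun k => Matrix.vecMulVec (b k) (b k)).sum) m v) :
    TangentBound (T.block b l m c') (S.block b l m c) A m v := by
  induction l generalizing A with
  | nil => simpa [SimplexPotential.block] using h
  | cons k l ih =>
    refine TangentBound.step hm (T.block b l m c').lipschitzWith (ih ?_)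
    rwa [← sub_smul, Matrix.smul_vecMulVec, Matrix.vecMulVec_smul, smul_smul, add_assoc,
      ← smul_add, ← List.sum_cons]

end Block

lemma le_of_quadratic_error {f : ℝ → ℝ} {a b C : ℝ} (hab : a ≤ b)
    (h : ∀ t s, a ≤ t → t ≤ s → s ≤ b → f t - C * (s - t) ^ 2 ≤ f s) : f a ≤ f b := by
  have hpartition (n : ℕ) (hn : 0 < n) : f a - C * (b - a) ^ 2 * (n : ℝ)⁻¹ ≤ f b := by
    have hn₀ : (0 : ℝ) < n := by exact_mod_cast hn
    set ε := (b - a) / n with hε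
    have hε₀ : 0 ≤ ε := div_nonneg (sub_nonneg.2 hab) hn₀.le
    have hnε : n * ε = b - a := mul_div_cancel₀ _ hn₀.ne'
    have htelescope (k : ℕ) (hk : k ≤ n) : f a - k * (C * ε ^ 2) ≤ f (a + k * ε) := by
      induction k with
      | zero => simp
      | succ k ih =>
        have hkn : (k + 1 : ℝ) * ε ≤ n * ε :=
          mul_le_mul_of_nonneg_right (by exact_mod_cast hk) hε₀
        have hkε : 0 ≤ k * ε := by positivity
        have hstep := h (a + k * ε) (a + (k + 1 : ℝ) * ε) (by linarith) (by linarith) (by linarith)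
        have hgap : a + (k + 1 : ℝ) * ε - (a + k * ε) = ε := by ring
        rw [hgap] at hstep
        push_cast
        linarith [ih (Nat.le_of_succ_le hk)]
    have hlast := htelescope n le_rfl
    have herror : n * (C * ε ^ 2) = C * (b - a) ^ 2 * (n : ℝ)⁻¹ := by
      rw [hε]
      field_simp
    rwa [hnε, add_sub_cancel, herror] at hlast
  have hlim : Tendsto (fun n : ℕ => f a - C * (b - a) ^ 2 * (n : ℝ)⁻¹) atTop (nhds (f a)) := by
    simpa only [mul_zero, sub_zero] using
      (tendsto_inv_atTop_nhds_zero_nat.const_mul (C * (b - a) ^ 2)).const_sub (f a)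
  exact le_of_tendsto hlim ((eventually_gt_atTop 0).mono hpartition)

/-! ## Coupling and field covariances -/

section Covariance

lemma two_mul_sum_sum_ite_lt {ι R : Type*} [Fintype ι] [LinearOrder ι] [CommRing R] (a : ι → R) :
    2 * ∑ i, ∑ j, (if i < j then a i * a j else 0) = (∑ i, a i) ^ 2 - ∑ i, a i ^ 2 := by
  have hswap : ∑ i, ∑ j, (if j < i then a i * a j else 0)
      = ∑ i, ∑ j, (if i < j then a i * a j else 0) := by
    rw [Finset.sum_comm]
    simp only [mul_comm]
  have hdiag : ∑ i, a i ^ 2 = ∑ i, ∑ j, (if i = j then a i * a j else 0) := by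
    simp only [Finset.sum_ite_eq, Finset.mem_univ, if_true, sq]
  have htrichotomy (i j : ι) : a i * a j = (if i < j then a i * a j else 0)
      + (if j < i then a i * a j else 0) + (if i = j then a i * a j else 0) := by
    rcases lt_trichotomy i j with h | h | h
    · simp [h, h.not_gt, h.ne]
    · simp [h]
    · simp [h, h.not_gt, h.ne']
  have hsquare : (∑ i, a i) ^ 2 = ∑ i, ∑ j, a i * a j := by rw [sq, Finset.sum_mul_sum]
  rw [hsquare, hdiag, two_mul, eq_sub_iff_add_eq]
  nth_rewrite 2 [← hswap]
  simp only [← Finset.sum_add_distrib, ← htrichotomy]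

lemma spin_mul_self (b : Bool) : spin b * spin b = 1 := by
  cases b <;> norm_num [spin]

lemma abs_spin (b : Bool) : |spin b| = 1 := by
  cases b <;> norm_num [spin]

variable {N : ℕ}

lemma natCast_mul_overlap (σ τ : Fin N → Bool) :
    (N : ℝ) * overlap N σ τ = ∑ i, spin (σ i) * spin (τ i) := by
  rcases N.eq_zero_or_pos with rfl | hN
  · simp
  · exact mul_inv_cancel_left₀ (by exact_mod_cast hN.ne') _

lemma abs_overlap_le_one (σ τ : Fin N → Bool) : |overlap N σ τ| ≤ 1 := by
  have hsum : |∑ i, spin (σ i) * spin (τ i)| ≤ N :=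
    (Finset.abs_sum_le_sum_abs _ _).trans (by simp [abs_mul, abs_spin])
  rw [overlap, abs_mul, abs_inv, Nat.abs_cast]
  exact inv_mul_le_one_of_le₀ hsum N.cast_nonneg

lemma overlap_self (hN : 1 ≤ N) (σ : Fin N → Bool) : overlap N σ σ = 1 := by
  have hN₀ : (N : ℝ) ≠ 0 := by exact_mod_cast (Nat.one_le_iff_ne_zero.1 hN)
  simp [overlap, spin_mul_self, hN₀]

/-- The vector `σ ↦ σ_i σ_j / √N` multiplying the coupling `J_{ij}`, `i < j`, in the energy; it
vanishes for `i ≥ j`, where `hamSK` ignores the coupling. -/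
def couplingDir (N : ℕ) (k : Fin N × Fin N) (σ : Fin N → Bool) : ℝ :=
  if k.1 < k.2 then 1 / √N * (spin (σ k.1) * spin (σ k.2)) else 0

/-- The vector `σ ↦ √s σ_i` multiplying the `i`-th field of a level of variance `s`. -/
def fieldDir (s : ℝ) (i : Fin N) (σ : Fin N → Bool) : ℝ := √s * spin (σ i)

/-- The energy `σ ↦ ∑_i y_i σ_i` of independent spins in the fields `y`. -/
def fieldVec (y : Fin N → ℝ) (σ : Fin N → Bool) : ℝ := ∑ i, y i * spin (σ i)

lemma sum_vecMulVec_couplingDir (hN : 1 ≤ N) :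
    ∑ k, Matrix.vecMulVec (couplingDir N k) (couplingDir N k)
      = Matrix.of fun σ τ => (N * overlap N σ τ ^ 2 - 1) / 2 := by
  have hN₀ : (0 : ℝ) < N := by exact_mod_cast hN
  ext σ τ
  set a : Fin N → ℝ := fun i => spin (σ i) * spin (τ i)
  have hsq (i : Fin N) : a i ^ 2 = 1 := by
    rw [mul_pow, sq, sq, spin_mul_self, spin_mul_self, one_mul]
  have hterm (i j : Fin N) : couplingDir N (i, j) σ * couplingDir N (i, j) τ
      = (N : ℝ)⁻¹ * if i < j then a i * a j else 0 := by
    have hsqrt : 1 / √N * (1 / √N) = (N : ℝ)⁻¹ := by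
      rw [div_mul_div_comm, Real.mul_self_sqrt hN₀.le, one_mul, one_div]
    simp only [couplingDir, a]
    split_ifs
    · linear_combination spin (σ i) * spin (σ j) * (spin (τ i) * spin (τ j)) * hsqrt
    · simp
  have hpairs := two_mul_sum_sum_ite_lt a
  simp only [hsq, ← natCast_mul_overlap σ τ, a, Finset.sum_const, Finset.card_univ,
    Fintype.card_fin, nsmul_eq_mul, mul_one] at hpairs
  simp only [Matrix.sum_apply, Matrix.vecMulVec_apply, Matrix.of_apply, Fintype.sum_prod_type,
    hterm, ← Finset.mul_sum]
  field_simp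
  linear_combination hpairs

lemma sum_vecMulVec_fieldDir {s : ℝ} (hs : 0 ≤ s) :
    ∑ i : Fin N, Matrix.vecMulVec (fieldDir s i) (fieldDir s i)
      = Matrix.of fun σ τ => s * (N * overlap N σ τ) := by
  ext σ τ
  simp only [Matrix.sum_apply, Matrix.vecMulVec_apply, Matrix.of_apply, fieldDir,
    natCast_mul_overlap, Finset.mul_sum]
  refine Finset.sum_congr rfl fun i _ => ?_
  linear_combination spin (σ i) * spin (τ i) * Real.mul_self_sqrt hs

/-- The covariance correction at overlap `R` when the amplitudes `(cos, sin)` of the couplings and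
of the fields up to level `q` move from angle `t` to angle `s`. -/
def interpCov (n t s q R : ℝ) : ℝ :=
  (Real.cos s - Real.cos t) * Real.cos t * ((n * R ^ 2 - 1) / 2)
    + (Real.sin s - Real.sin t) * Real.sin t * (q * (n * R))

lemma abs_interpCov_sub_le {n q R : ℝ} (hn : 1 ≤ n) (hq : |q| ≤ 1) (hR : |R| ≤ 1) (t s : ℝ) :
    |interpCov n t s q R
      - (Real.sin s ^ 2 - Real.sin t ^ 2) / 4 * (1 + n * q ^ 2 - n * (R - q) ^ 2)|
      ≤ n * (s - t) ^ 2 := by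
  have herror : interpCov n t s q R
      - (Real.sin s ^ 2 - Real.sin t ^ 2) / 4 * (1 + n * q ^ 2 - n * (R - q) ^ 2)
      = -((Real.cos s - Real.cos t) ^ 2 * ((n * R ^ 2 - 1) / 4)
        + (Real.sin s - Real.sin t) ^ 2 * (n * (q * R) / 2)) := by
    rw [interpCov]
    linear_combination ((n * R ^ 2 - 1) / 4) * Real.sin_sq_add_cos_sq s
      - ((n * R ^ 2 - 1) / 4) * Real.sin_sq_add_cos_sq t
  have hcos : (Real.cos s - Real.cos t) ^ 2 ≤ (s - t) ^ 2 := sq_le_sq.2 <| by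
    simpa [Real.dist_eq] using Real.lipschitzWith_cos.dist_le_mul s t
  have hsin : (Real.sin s - Real.sin t) ^ 2 ≤ (s - t) ^ 2 := sq_le_sq.2 <| by
    simpa [Real.dist_eq] using Real.lipschitzWith_sin.dist_le_mul s t
  have hR₂ : n * R ^ 2 ≤ n :=
    mul_le_of_le_one_right (by linarith) ((sq_le_one_iff_abs_le_one R).2 hR)
  have hR₂₀ : 0 ≤ n * R ^ 2 := by positivity
  have hcoupling : |(n * R ^ 2 - 1) / 4| ≤ n / 2 := by
    rw [abs_le]
    constructor <;> linarith
  have hfield : |n * (q * R) / 2| ≤ n / 2 := by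
    rw [abs_div, abs_mul, abs_mul, abs_two, abs_of_nonneg (by linarith : 0 ≤ n)]
    gcongr
    exact mul_le_of_le_one_right (by linarith) (mul_le_one₀ hq (abs_nonneg _) hR)
  rw [herror, abs_neg]
  calc _ ≤ (Real.cos s - Real.cos t) ^ 2 * |(n * R ^ 2 - 1) / 4|
        + (Real.sin s - Real.sin t) ^ 2 * |n * (q * R) / 2| := by
        refine (abs_add_le _ _).trans_eq ?_
        rw [abs_mul, abs_mul, abs_sq, abs_sq]
    _ ≤ (s - t) ^ 2 * (n / 2) + (s - t) ^ 2 * (n / 2) := by gcongr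
    _ = n * (s - t) ^ 2 := by ring

lemma interpCov_le {n q R t s : ℝ} (hn : 1 ≤ n) (hq : |q| ≤ 1) (hR : |R| ≤ 1)
    (hts : Real.sin t ^ 2 ≤ Real.sin s ^ 2) :
    interpCov n t s q R
      ≤ (Real.sin s ^ 2 - Real.sin t ^ 2) / 4 * (1 + n * q ^ 2) + n * (s - t) ^ 2 := by
  have hsquare : 0 ≤ (Real.sin s ^ 2 - Real.sin t ^ 2) / 4 * (n * (R - q) ^ 2) :=
    mul_nonneg (by linarith) (by positivity)
  linarith [(abs_le.1 (abs_interpCov_sub_le hn hq hR t s)).2]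

lemma le_interpCov_one_one {n : ℝ} (hn : 1 ≤ n) (t s : ℝ) :
    (Real.sin s ^ 2 - Real.sin t ^ 2) / 4 * (1 + n) - n * (s - t) ^ 2 ≤ interpCov n t s 1 1 := by
  linarith [(abs_le.1 (abs_interpCov_sub_le hn (abs_one (α := ℝ)).le (abs_one (α := ℝ)).le t s)).1]

/-- The covariance correction `interpCov` as a matrix indexed by pairs of configurations. -/
def interpMatrix (N : ℕ) (t s q : ℝ) : Matrix (Fin N → Bool) (Fin N → Bool) ℝ :=
  Matrix.of fun σ τ => interpCov N t s q (overlap N σ τ)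

lemma interpMatrix_zero (hN : 1 ≤ N) (t s : ℝ) :
    interpMatrix N t s 0 = ((Real.cos s - Real.cos t) * Real.cos t) •
      ∑ k, Matrix.vecMulVec (couplingDir N k) (couplingDir N k) := by
  rw [sum_vecMulVec_couplingDir hN]
  ext σ τ
  simp only [interpMatrix, interpCov, Matrix.smul_apply, Matrix.of_apply, smul_eq_mul]
  ring

lemma interpMatrix_add_sum_fieldDir {q q' : ℝ} (hq : q ≤ q') (t s : ℝ) :
    interpMatrix N t s q + ((Real.sin s - Real.sin t) * Real.sin t) •
      ∑ i, Matrix.vecMulVec (fieldDir (q' - q) i) (fieldDir (q' - q) i)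
      = interpMatrix N t s q' := by
  rw [sum_vecMulVec_fieldDir (sub_nonneg.2 hq)]
  ext σ τ
  simp only [interpMatrix, interpCov, Matrix.add_apply, Matrix.smul_apply, Matrix.of_apply,
    smul_eq_mul]
  ring

lemma interpMatrix_le (hN : 1 ≤ N) {q t s : ℝ} (hq : |q| ≤ 1)
    (hts : Real.sin t ^ 2 ≤ Real.sin s ^ 2) (σ τ : Fin N → Bool) :
    interpMatrix N t s q σ τ
      ≤ (Real.sin s ^ 2 - Real.sin t ^ 2) / 4 * (1 + N * q ^ 2) + N * (s - t) ^ 2 :=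
  interpCov_le (by exact_mod_cast hN) hq (abs_overlap_le_one σ τ) hts

lemma le_interpMatrix_one_self (hN : 1 ≤ N) (t s : ℝ) (σ : Fin N → Bool) :
    (Real.sin s ^ 2 - Real.sin t ^ 2) / 4 * (1 + N) - N * (s - t) ^ 2
      ≤ interpMatrix N t s 1 σ σ := by
  rw [interpMatrix, Matrix.of_apply, overlap_self hN]
  exact le_interpCov_one_one (by exact_mod_cast hN) t s

end Covariance

/-! ## The interpolating potentials -/

namespace ZeroTParam

variable (X : ZeroTParam) {a b : ℕ}

lemma q_mono (hab : a ≤ b) (hb : b ≤ X.K) : X.q a ≤ X.q b := by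
  induction b, hab using Nat.le_induction with
  | base => exact le_rfl
  | succ b _ ih => exact (ih (b.le_succ.trans hb)).trans (X.hq_mono b hb)

lemma abs_q_le_one (ha : a ≤ X.K) : |X.q a| ≤ 1 := by
  rw [abs_of_nonneg (X.hq0 ▸ X.q_mono a.zero_le ha), ← X.hqK]
  exact X.q_mono ha le_rfl

lemma m_le_succ (ha : a < X.K) : X.m a ≤ X.m (a + 1) := by
  rcases a.eq_zero_or_pos with rfl | ha₀
  · exact X.hm0.trans_le X.hm1
  · exact X.hm_mono a ha₀ ha

lemma m_nonneg (ha : a ≤ X.K) : 0 ≤ X.m a := by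
  induction a with
  | zero => exact X.hm0.ge
  | succ a ih => exact (ih (a.le_succ.trans ha)).trans (X.m_le_succ ha)

/-- The sum `∑_{b > a} m_b (q_b² - q_{b-1}²)`, twice the integral of `r x̄(r)` over `[q_a, 1]`. -/
def quadEnergy (a : ℕ) : ℝ :=
  ∑ b ∈ Finset.Ico a X.K, X.m (b + 1) * (X.q (b + 1) ^ 2 - X.q b ^ 2)

variable {N : ℕ} {β : ℝ} (hβ : 0 < β)

/-- Log-sum-exp over `σ` after the Gaussian fields of the last `j` levels of the order parameter,
with amplitude `c`, have been averaged out. As in `parisiLevelBar`, `j` counts levels from the top,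
so that the potential sits at level `K - j`. -/
def fieldSystem (N : ℕ) (c : ℝ) : ℕ → SimplexPotential (Fin N → Bool)
  | 0 => lse hβ
  | j + 1 => (fieldSystem N c j).block (fieldDir (X.q (X.K - j) - X.q (X.K - j - 1)))
      Finset.univ.toList (X.m (X.K - j)) c

lemma fieldSystem_sub (c : ℝ) (ha : a < X.K) :
    X.fieldSystem hβ N c (X.K - a) = (X.fieldSystem hβ N c (X.K - (a + 1))).block
      (fieldDir (X.q (a + 1) - X.q a)) Finset.univ.toList (X.m (a + 1)) c := by
  obtain ⟨j, hj⟩ : ∃ j, X.K - a = j + 1 := ⟨X.K - (a + 1), by omega⟩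
  rw [hj, fieldSystem, show X.K - (a + 1) = j by omega, show X.K - j = a + 1 by omega,
    Nat.add_sub_cancel]

/-- Guerra's interpolation at angle `θ`: amplitude `cos θ` for the couplings, which are averaged at
`m = 0`, and `sin θ` for the fields of the order parameter. -/
def interp (N : ℕ) (θ : ℝ) : SimplexPotential (Fin N → Bool) :=
  (X.fieldSystem hβ N (Real.sin θ) X.K).block (couplingDir N) Finset.univ.toList 0 (Real.cos θ)

lemma tangentBound_fieldSystem (hN : 1 ≤ N) (hmβ : X.m X.K ≤ β) {t s : ℝ}
    (hts : Real.sin t ^ 2 ≤ Real.sin s ^ 2) (ha : a ≤ X.K) :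
    TangentBound (X.fieldSystem hβ N (Real.sin s) (X.K - a))
      (X.fieldSystem hβ N (Real.sin t) (X.K - a)) (interpMatrix N t s (X.q a)) (X.m a)
      ((Real.sin s ^ 2 - Real.sin t ^ 2) / 4
          * (X.m a + N * (X.m a * X.q a ^ 2 + X.quadEnergy a))
        - (2 * β - X.m a) * (N * (s - t) ^ 2)) := by
  induction ha using Nat.decreasingInduction with
  | self =>
    rw [Nat.sub_self, X.hqK]
    refine (tangentBound_lse hβ (le_interpMatrix_one_self hN t s)).of_le hmβ
      (interpMatrix_le hN abs_one.le hts) ?_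
    rw [quadEnergy, Finset.Ico_self, Finset.sum_empty]
    linarith
  | of_succ a ha ih =>
    rw [← interpMatrix_add_sum_fieldDir (X.hq_mono a ha), ← Finset.sum_map_toList] at ih
    rw [fieldSystem_sub _ _ _ ha, fieldSystem_sub _ _ _ ha]
    refine (TangentBound.block (X.m_nonneg ha) ih).of_le (X.m_le_succ ha)
      (interpMatrix_le hN (X.abs_q_le_one ha.le) hts) ?_
    rw [quadEnergy, Finset.sum_eq_sum_Ico_succ_bot ha, ← quadEnergy]
    linarith

lemma interp_add_le (hN : 1 ≤ N) (hmβ : X.m X.K ≤ β) {t s : ℝ}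
    (hts : Real.sin t ^ 2 ≤ Real.sin s ^ 2) (x : (Fin N → Bool) → ℝ) :
    X.interp hβ N t x + (Real.sin s ^ 2 - Real.sin t ^ 2) * (N / 4 * X.quadEnergy 0)
      - 2 * β * N * (s - t) ^ 2 ≤ X.interp hβ N s x := by
  have hfields := X.tangentBound_fieldSystem hβ hN hmβ hts X.K.zero_le
  rw [Nat.sub_zero, X.hm0, X.hq0, interpMatrix_zero hN, ← Finset.sum_map_toList, ← zero_add (_ • _)]
    at hfields
  have htangent := TangentBound.block le_rfl hfields x x
  simp only [sub_self, dotProduct_zero, SimplexPotential.curvature, Matrix.zero_apply, zero_mul,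
    Finset.sum_const_zero] at htangent
  unfold interp
  linarith

theorem interp_zero_add_le (hN : 1 ≤ N) (hmβ : X.m X.K ≤ β) (x : (Fin N → Bool) → ℝ) :
    X.interp hβ N 0 x + N / 4 * X.quadEnergy 0 ≤ X.interp hβ N (Real.pi / 2) x := by
  have hmono := le_of_quadratic_error
    (f := fun θ => X.interp hβ N θ x - Real.sin θ ^ 2 * (N / 4 * X.quadEnergy 0))
    (C := 2 * β * N) Real.pi_div_two_pos.le fun t s ht hts hs => by
      have hsin₀ : 0 ≤ Real.sin t :=
        Real.sin_nonneg_of_nonneg_of_le_pi ht (by linarith [Real.pi_pos])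
      have hsin : Real.sin t ≤ Real.sin s :=
        Real.sin_le_sin_of_le_of_le_pi_div_two (by linarith [Real.pi_pos]) hs hts
      linarith [X.interp_add_le hβ hN hmβ (pow_le_pow_left₀ hsin₀ hsin 2) x]
  simp only [Real.sin_zero, Real.sin_pi_div_two] at hmono
  linarith

end ZeroTParam

/-! ## The Parisi end of the interpolation -/

section ParisiEnd

open scoped NNReal

variable {N : ℕ}

lemma fieldVec_add_smul_fieldDir (y : Fin N → ℝ) (s z : ℝ) (k : Fin N) :
    fieldVec y + z • (1 : ℝ) • fieldDir s k = fieldVec (Function.update y k (y k + z • √s)) := by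
  have hupdate : Function.update y k (y k + z • √s) = y + Pi.single k (z * √s) := by
    ext i
    rcases eq_or_ne i k with rfl | hi
    · simp
    · simp [hi]
  rw [hupdate]
  ext σ
  simp only [fieldVec, fieldDir, Pi.add_apply, Pi.smul_apply, smul_eq_mul, one_mul, add_mul,
    Finset.sum_add_distrib, Pi.single_apply, ite_mul, zero_mul, Finset.sum_ite_eq',
    Finset.mem_univ, if_true, mul_assoc]

variable (S : SimplexPotential (Fin N → Bool)) {m s C : ℝ}

lemma SimplexPotential.step_fieldVec_le {G : Fin N → ℝ → ℝ} {k : Fin N} {L : ℝ≥0}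
    (hG : LipschitzWith L (G k)) (hm : 0 ≤ m)
    (hS : ∀ y, S (fieldVec y) ≤ ∑ i, G i (y i) + C) (y : Fin N → ℝ) :
    S.step m ((1 : ℝ) • fieldDir s k) (fieldVec y)
      ≤ ∑ i, Function.update G k (pStep m s (G k)) i (y i) + C := by
  have hsum (f : Fin N → ℝ) : ∑ i, f i = f k + ∑ i ∈ Finset.univ.erase k, f i :=
    (Finset.add_sum_erase _ _ (Finset.mem_univ k)).symm
  have hrest : ∑ i ∈ Finset.univ.erase k, Function.update G k (pStep m s (G k)) i (y i)
      = ∑ i ∈ Finset.univ.erase k, G i (y i) :=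
    Finset.sum_congr rfl fun i hi => by rw [Function.update_of_ne (Finset.ne_of_mem_erase hi)]
  rw [hsum, hrest, Function.update_self, pStep_eq_gaussStep, add_assoc]
  refine gaussStep_le_add_const hm S.lipschitzWith hG fun z => ?_
  rw [fieldVec_add_smul_fieldDir]
  refine (hS _).trans_eq ?_
  rw [hsum, Function.update_self, add_assoc]
  congr 2
  exact Finset.sum_congr rfl fun i hi => by
    rw [Function.update_of_ne (Finset.ne_of_mem_erase hi)]

lemma SimplexPotential.block_fieldVec_le {g : ℝ → ℝ} {L : ℝ≥0} (hg : LipschitzWith L g)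
    (hm : 0 ≤ m) (hS : ∀ y, S (fieldVec y) ≤ ∑ i, g (y i) + C) {l : List (Fin N)} (hl : l.Nodup)
    (y : Fin N → ℝ) :
    S.block (fieldDir s) l m 1 (fieldVec y)
      ≤ ∑ i, (if i ∈ l then pStep m s g else g) (y i) + C := by
  induction l generalizing y with
  | nil => simpa [SimplexPotential.block] using hS y
  | cons k l ih =>
    obtain ⟨hk, hl⟩ := List.nodup_cons.1 hl
    set G : Fin N → ℝ → ℝ := fun i => if i ∈ l then pStep m s g else g
    have hGk : G k = g := if_neg hk
    have hupdate : Function.update G k (pStep m s (G k))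
        = fun i => if i ∈ k :: l then pStep m s g else g := by
      funext i
      rcases eq_or_ne i k with rfl | hi
      · rw [Function.update_self, hGk, if_pos List.mem_cons_self]
      · simp only [Function.update_of_ne hi, List.mem_cons, hi, false_or, G]
    have hstep := (S.block (fieldDir s) l m 1).step_fieldVec_le (s := s) (hGk ▸ hg) hm (ih hl) y
    rwa [hupdate] at hstep

lemma lse_fieldVec_le {β : ℝ} (hβ : 0 < β) (y : Fin N → ℝ) :
    lse hβ (fieldVec y) ≤ ∑ i, |y i| + N * (Real.log 2 / β) := by
  have hle (σ : Fin N → Bool) : fieldVec y σ ≤ ∑ i, |y i| :=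
    Finset.sum_le_sum fun i _ => (le_abs_self _).trans_eq (by rw [abs_mul, abs_spin, mul_one])
  refine (lse_le hβ hle).trans_eq ?_
  simp [mul_div_assoc]

namespace ZeroTParam

variable (X : ZeroTParam) {a : ℕ}

lemma parisiLevelBar_sub (ha : a < X.K) :
    parisiLevelBar X.K X.q X.m (X.K - a) = pStep (X.m (a + 1)) (X.q (a + 1) - X.q a)
      (parisiLevelBar X.K X.q X.m (X.K - (a + 1))) := by
  obtain ⟨j, hj⟩ : ∃ j, X.K - a = j + 1 := ⟨X.K - (a + 1), by omega⟩
  rw [hj, parisiLevelBar, show X.K - (a + 1) = j by omega, show X.K - j = a + 1 by omega,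
    Nat.add_sub_cancel]

lemma lipschitzWith_parisiLevelBar (ha : a ≤ X.K) :
    LipschitzWith 1 (parisiLevelBar X.K X.q X.m (X.K - a)) := by
  induction ha using Nat.decreasingInduction with
  | self =>
    rw [Nat.sub_self]
    exact lipschitzWith_one_norm
  | of_succ a ha ih =>
    rw [parisiLevelBar_sub X ha]
    exact lipschitzWith_gaussStep (X.m_nonneg ha) ih _

variable {β : ℝ} (hβ : 0 < β)

lemma fieldSystem_one_fieldVec_le (ha : a ≤ X.K) (y : Fin N → ℝ) :
    X.fieldSystem hβ N 1 (X.K - a) (fieldVec y)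
      ≤ ∑ i, parisiLevelBar X.K X.q X.m (X.K - a) (y i) + N * (Real.log 2 / β) := by
  induction ha using Nat.decreasingInduction generalizing y with
  | self =>
    rw [Nat.sub_self]
    exact lse_fieldVec_le hβ y
  | of_succ a ha ih =>
    rw [fieldSystem_sub _ _ _ ha, parisiLevelBar_sub X ha]
    have hblock := SimplexPotential.block_fieldVec_le (s := X.q (a + 1) - X.q a) _
      (X.lipschitzWith_parisiLevelBar ha) (X.m_nonneg ha) ih
      (Finset.nodup_toList (Finset.univ : Finset (Fin N))) y
    simpa only [Finset.mem_toList, Finset.mem_univ, if_true] using hblock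

theorem interp_pi_div_two_le (h : ℝ) :
    X.interp hβ N (Real.pi / 2) (fieldVec fun _ => h)
      ≤ N * (parisiLevelBar X.K X.q X.m X.K h + Real.log 2 / β) := by
  rw [interp, Real.cos_pi_div_two, Real.sin_pi_div_two, SimplexPotential.coe_block_zero_amplitude]
  refine (X.fieldSystem_one_fieldVec_le hβ X.K.zero_le fun _ => h).trans_eq ?_
  simp [mul_add]

end ZeroTParam

end ParisiEnd

/-! ## The ground state end of the interpolation -/

section GroundStateEnd

lemma measurePreserving_curry {ι κ α : Type*} [Fintype ι] [Fintype κ] [MeasurableSpace α]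
    (μ : ι → κ → Measure α) [∀ i j, IsProbabilityMeasure (μ i j)] :
    MeasurePreserving (MeasurableEquiv.curry ι κ α) (Measure.pi fun p : ι × κ => μ p.1 p.2)
      (Measure.pi fun i => Measure.pi (μ i)) where
  measurable := (MeasurableEquiv.curry ι κ α).measurable
  map_eq := by
    have hcurry := Measure.infinitePi_map_curry μ
    simp only [Measure.infinitePi_eq_pi] at hcurry
    exact hcurry

lemma lipschitzWith_iSup {ι : Type*} [Fintype ι] [Nonempty ι] :
    LipschitzWith 1 fun x : ι → ℝ => ⨆ i, x i :=
  LipschitzWith.of_le_add fun x y => ciSup_le fun i => by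
    have hdist : x i - y i ≤ dist x y := (le_abs_self _).trans (dist_le_pi_dist x y i)
    linarith [le_ciSup (Set.finite_range y).bddAbove i]

lemma neg_ciInf_neg {ι : Type*} (f : ι → ℝ) : -⨅ i, -f i = ⨆ i, f i := by
  rw [iInf, Real.sInf_def, neg_neg, ← Set.image_neg_eq_neg, ← Set.range_comp]
  simp only [Function.comp_def, neg_neg, iSup]

variable {N : ℕ} (h : ℝ)

/-- The vector `σ ↦ -H_N(σ)` for the external field `h` and couplings `z`, written as a linear
combination of the directions `couplingDir`. -/
def negHam (z : Fin N × Fin N → ℝ) : (Fin N → Bool) → ℝ :=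
  (fieldVec fun _ => h) + (Finset.univ.toList.map fun k => z k • couplingDir N k).sum

lemma integrable_negHam : Integrable (negHam h) (Measure.pi fun _ : Fin N × Fin N => stdGauss) :=
  (integrable_const _).add (integrable_sum_smul (couplingDir N) _)

lemma hamSK_curry (z : Fin N × Fin N → ℝ) (σ : Fin N → Bool) :
    hamSK N h (Function.curry z) σ = -negHam h z σ := by
  have hterm (i j : Fin N) : z (i, j) * couplingDir N (i, j) σ
      = 1 / √N * if i < j then z (i, j) * spin (σ i) * spin (σ j) else 0 := by
    rw [couplingDir]
    split_ifs <;> ring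
  rw [negHam, Finset.sum_map_toList, Pi.add_apply, Finset.sum_apply, Fintype.sum_prod_type, hamSK,
    fieldVec]
  simp only [Pi.smul_apply, smul_eq_mul, hterm, ← Finset.mul_sum, Function.curry]
  ring

lemma mul_eGS_curry (hN : 1 ≤ N) (z : Fin N × Fin N → ℝ) :
    N * eGS N h (Function.curry z) = ⨆ σ, negHam h z σ := by
  have hN₀ : (N : ℝ) ≠ 0 := by exact_mod_cast (Nat.one_le_iff_ne_zero.1 hN)
  simp only [eGS, hamSK_curry]
  rw [← mul_neg, mul_inv_cancel_left₀ hN₀, neg_ciInf_neg]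

lemma mul_eQuenched (hN : 1 ≤ N) :
    N * eQuenched N h
      = ∫ z, ⨆ σ, negHam h z σ ∂Measure.pi fun _ : Fin N × Fin N => stdGauss := by
  simp only [← mul_eGS_curry h hN]
  rw [integral_const_mul]
  congr 1
  exact ((measurePreserving_curry fun _ _ : Fin N => stdGauss).integral_comp' (eGS N h)).symm

namespace ZeroTParam

variable (X : ZeroTParam) {β : ℝ} (hβ : 0 < β)

lemma coe_fieldSystem_zero_amplitude (j : ℕ) :
    (X.fieldSystem hβ N 0 j : ((Fin N → Bool) → ℝ) → ℝ) = lse hβ := by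
  induction j with
  | zero => rfl
  | succ j ih => rw [fieldSystem, SimplexPotential.coe_block_zero_amplitude, ih]

theorem mul_eQuenched_le_interp_zero (hN : 1 ≤ N) :
    N * eQuenched N h ≤ X.interp hβ N 0 (fieldVec fun _ => h) := by
  rw [interp, Real.sin_zero, Real.cos_zero,
    SimplexPotential.block_zero_eq_integral _ _ (Finset.nodup_toList _),
    coe_fieldSystem_zero_amplitude, mul_eQuenched h hN]
  exact integral_mono (integrable_comp_of_lipschitzWith lipschitzWith_iSup (integrable_negHam h))
    (integrable_comp_of_lipschitzWith (lse hβ).lipschitzWith (integrable_negHam h))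
    fun _ => ciSup_le (le_lse hβ _)

end ZeroTParam

end GroundStateEnd

/-! ## The trial function -/

namespace ZeroTParam

variable (X : ZeroTParam)

lemma xFun_eq {a : ℕ} (ha : a < X.K) {r : ℝ} (hr : r ∈ Set.Ioo (X.q a) (X.q (a + 1))) :
    xFun X.K X.q X.m r = X.m (a + 1) := by
  have hr₁ : ¬1 ≤ r := by
    have := X.q_mono (Nat.succ_le_of_lt ha) le_rfl
    linarith [hr.2, X.hqK]
  have hlevel : sInf {b : ℕ | r < X.q b} = a + 1 := by
    refine le_antisymm (Nat.sInf_le hr.2) (le_csInf ⟨a + 1, hr.2⟩ fun b hb => ?_)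
    by_contra! hba
    linarith [X.q_mono (Nat.le_of_lt_succ hba) ha.le, hr.1, show r < X.q b from hb]
  rw [xFun, if_neg hr₁, hlevel]

lemma integral_mul_xFun :
    ∫ r in (0 : ℝ)..1, r * xFun X.K X.q X.m r = 1 / 2 * X.quadEnergy 0 := by
  have heqOn (a : ℕ) (ha : a < X.K) : Set.EqOn (fun r => r * X.m (a + 1))
      (fun r => r * xFun X.K X.q X.m r) (Set.Ioo (X.q a) (X.q (a + 1))) :=
    fun r hr => by simp only [X.xFun_eq ha hr]
  have hint (a : ℕ) (ha : a < X.K) : IntervalIntegrable (fun r => r * xFun X.K X.q X.m r) volume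
      (X.q a) (X.q (a + 1)) := by
    refine IntervalIntegrable.congr_uIoo (f := fun r => r * X.m (a + 1))
      (Continuous.intervalIntegrable (by fun_prop) _ _) ?_
    rw [Set.uIoo_of_le (X.hq_mono a ha)]
    exact heqOn a ha
  have hsum := intervalIntegral.sum_integral_adjacent_intervals hint
  rw [X.hq0, X.hqK] at hsum
  rw [← hsum, quadEnergy, ← Finset.range_eq_Ico, Finset.mul_sum]
  refine Finset.sum_congr rfl fun a ha => ?_
  have ha := Finset.mem_range.1 ha
  rw [← intervalIntegral.integral_congr_Ioo_of_le (X.hq_mono a ha) (heqOn a ha),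
    intervalIntegral.integral_mul_const, integral_id]
  ring

variable {N : ℕ}

lemma eQuenched_le_gsTrial_add {β : ℝ} (hN : 1 ≤ N) (h : ℝ) (hβ : 0 < β) (hmβ : X.m X.K ≤ β) :
    eQuenched N h ≤ gsTrial X.K X.q X.m h + Real.log 2 / β := by
  have hN₀ : (0 : ℝ) < N := by exact_mod_cast hN
  have hground := X.mul_eQuenched_le_interp_zero h hβ hN
  have hinterp := X.interp_zero_add_le hβ hN hmβ (fieldVec fun _ => h)
  have hparisi := X.interp_pi_div_two_le (N := N) hβ h
  rw [gsTrial, integral_mul_xFun]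
  refine le_of_mul_le_mul_left ?_ hN₀
  linarith

theorem eQuenched_le_gsTrial (hN : 1 ≤ N) (h : ℝ) : eQuenched N h ≤ gsTrial X.K X.q X.m h := by
  have hlim : Tendsto (fun β : ℝ => gsTrial X.K X.q X.m h + Real.log 2 / β) atTop
      (nhds (gsTrial X.K X.q X.m h)) := by
    simpa using (tendsto_const_nhds.div_atTop tendsto_id).const_add (gsTrial X.K X.q X.m h)
  refine ge_of_tendsto hlim ?_
  filter_upwards [eventually_gt_atTop 0, eventually_ge_atTop (X.m X.K)] with β hβ hmβ
  exact X.eQuenched_le_gsTrial_add hN h hβ hmβ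

instance : Nonempty ZeroTParam :=
  ⟨{ K := 1
     hK := le_rfl
     q := fun a => a
     m := 0
     hq0 := Nat.cast_zero
     hqK := Nat.cast_one
     hq_mono := fun a _ => by exact_mod_cast a.le_succ
     hm0 := rfl
     hm1 := le_rfl
     hm_mono := fun _ _ _ => le_rfl }⟩

end ZeroTParam

/-- broken replica bound for the ground state, Theorem `tbound1`:
for every `N ≥ 1`, `h ∈ ℝ`, and every zero-temperature order parameter `x̄`,
`e_N(h) ≤ α̃(h; x̄) = f̄(0, h; x̄) − (1/2) ∫₀¹ r x̄(r) dr`, and consequently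
`e_N(h) ≤ inf_{x̄} α̃(h; x̄)`, uniformly in `N`. -/
theorem ground_state_bound (N : ℕ) (hN : 1 ≤ N) (h : ℝ) :
    (∀ X : ZeroTParam, eQuenched N h ≤ gsTrial X.K X.q X.m h)
    ∧ eQuenched N h ≤ ⨅ X : ZeroTParam, gsTrial X.K X.q X.m h :=
  ⟨fun X => X.eQuenched_le_gsTrial hN h, le_ciInf fun X => X.eQuenched_le_gsTrial hN h⟩

end
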